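/- There exist absolute constants c₀, c₁ > 0 such that the following holds. Let N' be a prime, let η > 0, and let A' ⊆ ℤ/N'ℤ with |A'| ≥ ηN'. Then the number of triples (n₁, n₂, n₃) ∈ A'³ with n₁ + n₃ = 2n₂ is at least η·N'²/(c₀·exp(c₁·η^{−3/2}·(log(1/η))³)). -/

import Mathlib

/-!
Suppose that `A` has density `α` in a Bohr set but contains few three-term progressions, and let
`F x` be the normalised number of progressions of `A` with midpoint `x`, localised to nested Bohr
sets. Then `F` is small at most points of `A`. Croot–Sisask sampling gives a large set `S` such
that `F` changes little, in a multiplicative sense, when it is averaged over `S - S`, so even a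
`k`-fold average is small at some point `x` of `A`. The Fourier transform of that average is
concentrated on the large spectrum of `S`, which by Chang's theorem relative to a Bohr set is nearly
annihilated by a Bohr set `D` with only a few additional frequencies. The average therefore stays
small on `x + D + D`. But averaging `F` over `D + D` gives a convolution square of the densities of
`A` on the translates of `{v + v | v ∈ D}`, which would be large if none of these densities exceeded
`11 / 10 * α`.

So few progressions force a density increment, which can happen only `O(log (1 / η))` times. This
produces the factor `exp (-C * η⁻¹ * log (1 / η) ^ 7)`, and `log (1 / η) ^ 4 ≪ η ^ (-1 / 2)`.
Doubling has to be injective, so `ZMod N` is first replaced by `ZMod (2 * N + 1)`.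
-/

open Finset
open scoped BigOperators Pointwise ComplexConjugate

section AbelianGroup

variable {G : Type*} [AddCommGroup G]

/-! ### Bohr sets -/

section Character

variable [Finite G]

lemma norm_character_sub (γ : AddChar G ℂ) (x y : G) : ‖γ x - γ y‖ = ‖1 - γ (y - x)‖ := by
  have factor : γ x - γ y = γ x * (1 - γ (y - x)) := by
    rw [mul_sub, ← AddChar.map_add_eq_mul, mul_one, add_sub_cancel]
  rw [factor, norm_mul, AddChar.norm_apply, one_mul]

lemma norm_one_sub_character_neg (γ : AddChar G ℂ) (x : G) : ‖1 - γ (-x)‖ = ‖1 - γ x‖ := by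
  have h := norm_character_sub γ x 0
  rw [zero_sub, AddChar.map_zero_eq_one] at h
  rw [← h, norm_sub_rev]

lemma norm_one_sub_character_add_le (γ : AddChar G ℂ) (x y : G) :
    ‖1 - γ (x + y)‖ ≤ ‖1 - γ x‖ + ‖1 - γ y‖ := by
  have h := norm_character_sub γ x (x + y)
  rw [add_sub_cancel_left] at h
  exact h ▸ norm_sub_le_norm_sub_add_norm_sub 1 (γ x) (γ (x + y))

end Character

section Bohr

variable [Fintype G]

open Classical in
/-- The Bohr set of width `ρ` with frequency set `Γ`. Distances are measured by the chord
`‖1 - γ x‖` rather than by an argument, so that `ρ = 2` gives the whole group. -/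
noncomputable def bohrSet (Γ : Finset (AddChar G ℂ)) (ρ : ℝ) : Finset G :=
  {x | ∀ γ ∈ Γ, ‖1 - γ x‖ ≤ ρ}

variable {Γ Δ : Finset (AddChar G ℂ)} {ρ σ τ : ℝ} {x y : G}

lemma mem_bohrSet : x ∈ bohrSet Γ ρ ↔ ∀ γ ∈ Γ, ‖1 - γ x‖ ≤ ρ := by
  simp [bohrSet]

lemma add_mem_bohrSet (hx : x ∈ bohrSet Γ ρ) (hy : y ∈ bohrSet Γ σ) (h : ρ + σ ≤ τ) :
    x + y ∈ bohrSet Γ τ :=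
  mem_bohrSet.2 fun γ hγ ↦ (norm_one_sub_character_add_le γ x y).trans <|
    (add_le_add (mem_bohrSet.1 hx γ hγ) (mem_bohrSet.1 hy γ hγ)).trans h

lemma neg_mem_bohrSet (hx : x ∈ bohrSet Γ ρ) : -x ∈ bohrSet Γ ρ :=
  mem_bohrSet.2 fun γ hγ ↦ (norm_one_sub_character_neg γ x).trans_le (mem_bohrSet.1 hx γ hγ)

lemma sub_mem_bohrSet (hx : x ∈ bohrSet Γ ρ) (hy : y ∈ bohrSet Γ σ) (h : ρ + σ ≤ τ) :
    x - y ∈ bohrSet Γ τ :=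
  sub_eq_add_neg x y ▸ add_mem_bohrSet hx (neg_mem_bohrSet hy) h

lemma bohrSet_mono (h : ρ ≤ σ) : bohrSet Γ ρ ⊆ bohrSet Γ σ := fun _ hx ↦
  mem_bohrSet.2 fun γ hγ ↦ (mem_bohrSet.1 hx γ hγ).trans h

lemma bohrSet_anti (h : Γ ⊆ Δ) : bohrSet Δ ρ ⊆ bohrSet Γ ρ := fun _ hx ↦
  mem_bohrSet.2 fun γ hγ ↦ mem_bohrSet.1 hx γ (h hγ)

lemma zero_mem_bohrSet (h : 0 ≤ ρ) : (0 : G) ∈ bohrSet Γ ρ :=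
  mem_bohrSet.2 fun γ _ ↦ by simpa using h

lemma bohrSet_nonempty (h : 0 ≤ ρ) : (bohrSet Γ ρ).Nonempty :=
  ⟨0, zero_mem_bohrSet h⟩

lemma bohrSet_card_pos (h : 0 ≤ ρ) : (0 : ℝ) < #(bohrSet Γ ρ) :=
  Nat.cast_pos.2 (bohrSet_nonempty h).card_pos

lemma bohrSet_two (Γ : Finset (AddChar G ℂ)) : bohrSet Γ 2 = univ := by
  refine eq_univ_of_forall fun x ↦ mem_bohrSet.2 fun γ _ ↦ ?_
  calc ‖1 - γ x‖ ≤ ‖(1 : ℂ)‖ + ‖γ x‖ := norm_sub_le _ _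
    _ = 2 := by rw [AddChar.norm_apply, norm_one]; norm_num

-- The values `1 - γ x` lie in a square of side `4 * ρ`; it is cut into cells of side `ρ / 2`, and
-- two points of the larger Bohr set with all their values in common cells differ by a point of
-- the smaller one.
lemma bohrSet_card_double_le (Γ : Finset (AddChar G ℂ)) (hρ : 0 < ρ) :
    #(bohrSet Γ (2 * ρ)) ≤ 128 ^ #Γ * #(bohrSet Γ ρ) := by
  classical
  let cells : Finset (Γ → ℤ × ℤ) := Fintype.piFinset fun _ ↦ Icc (-4) 4 ×ˢ Icc (-4) 4
  let cell (x : G) (γ : Γ) : ℤ × ℤ := (⌊2 * (1 - γ.1 x).re / ρ⌋, ⌊2 * (1 - γ.1 x).im / ρ⌋)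
  have card_cells : #cells ≤ 128 ^ #Γ := by
    simp only [cells, Fintype.card_piFinset, card_product, Int.card_Icc, Finset.prod_const,
      Finset.card_univ, Fintype.card_coe]
    exact Nat.pow_le_pow_left (by decide) _
  have floor_mem {r : ℝ} (hr : |r| ≤ 2 * ρ) : ⌊2 * r / ρ⌋ ∈ Icc (-4 : ℤ) 4 := by
    have ⟨hr₁, hr₂⟩ := abs_le.1 hr
    have upper : 2 * r / ρ < 5 := by rw [div_lt_iff₀ hρ]; linarith
    have lower : -4 ≤ 2 * r / ρ := by rw [le_div_iff₀ hρ]; linarith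
    exact mem_Icc.2 ⟨Int.le_floor.2 (by exact_mod_cast lower),
      Int.lt_add_one_iff.1 (Int.floor_lt.2 (by exact_mod_cast upper))⟩
  have cell_mem : ∀ x ∈ bohrSet Γ (2 * ρ), cell x ∈ cells := fun x hx ↦
    Fintype.mem_piFinset.2 fun γ ↦ mem_product.2
      ⟨floor_mem ((Complex.abs_re_le_norm _).trans (mem_bohrSet.1 hx γ.1 γ.2)),
        floor_mem ((Complex.abs_im_le_norm _).trans (mem_bohrSet.1 hx γ.1 γ.2))⟩
  have abs_sub_le {r s : ℝ} (h : ⌊2 * r / ρ⌋ = ⌊2 * s / ρ⌋) : |r - s| ≤ ρ / 2 := by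
    have hlt := Int.abs_sub_lt_one_of_floor_eq_floor h
    rw [← sub_div, ← mul_sub, abs_div, abs_mul, abs_two, abs_of_pos hρ, div_lt_one hρ] at hlt
    linarith
  have card_fiber : ∀ c ∈ cells, #{x ∈ bohrSet Γ (2 * ρ) | cell x = c} ≤ #(bohrSet Γ ρ) := by
    intro c _
    obtain h | ⟨x₀, hx₀⟩ := (filter (cell · = c) (bohrSet Γ (2 * ρ))).eq_empty_or_nonempty
    · simp [h]
    refine card_le_card_of_injOn (· - x₀) (fun x hx ↦ mem_bohrSet.2 fun γ hγ ↦ ?_)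
      (sub_left_injective.injOn)
    have same := congrFun ((mem_filter.1 hx).2.trans (mem_filter.1 hx₀).2.symm) ⟨γ, hγ⟩
    rw [← norm_character_sub, ← sub_sub_sub_cancel_left _ _ 1]
    refine (Complex.norm_le_abs_re_add_abs_im _).trans ?_
    rw [Complex.sub_re, Complex.sub_im]
    linarith [abs_sub_le (Prod.ext_iff.1 same).1, abs_sub_le (Prod.ext_iff.1 same).2]
  calc #(bohrSet Γ (2 * ρ)) ≤ #(bohrSet Γ ρ) * #cells :=
        card_le_mul_card_image_of_maps_to cell_mem _ card_fiber
    _ ≤ 128 ^ #Γ * #(bohrSet Γ ρ) := by rw [mul_comm]; gcongr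

lemma card_le_pow_mul_bohrSet_card (Γ : Finset (AddChar G ℂ)) (k : ℕ) :
    Fintype.card G ≤ 128 ^ (#Γ * k) * #(bohrSet Γ (2 / 2 ^ k)) := by
  induction k with
  | zero => simp [bohrSet_two]
  | succ k ih =>
    have h := bohrSet_card_double_le Γ (ρ := 2 / 2 ^ (k + 1)) (by positivity)
    rw [show (2 : ℝ) * (2 / 2 ^ (k + 1)) = 2 / 2 ^ k by field_simp; ring] at h
    calc Fintype.card G ≤ 128 ^ (#Γ * k) * #(bohrSet Γ (2 / 2 ^ k)) := ih
      _ ≤ 128 ^ (#Γ * k) * (128 ^ #Γ * #(bohrSet Γ (2 / 2 ^ (k + 1)))) := by gcongr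
      _ = 128 ^ (#Γ * (k + 1)) * #(bohrSet Γ (2 / 2 ^ (k + 1))) := by ring

lemma nsmul_subset_bohrSet [DecidableEq G] {A : Finset G} (hA : A ⊆ bohrSet Γ σ) (j : ℕ) :
    j • A ⊆ bohrSet Γ (j * σ) := by
  induction j with
  | zero => simpa using zero_mem_bohrSet (Γ := Γ) (G := G) le_rfl
  | succ j ih =>
    rw [succ_nsmul]
    exact add_subset_iff.2 fun x hx y hy ↦
      add_mem_bohrSet (ih hx) (hA hy) (by push_cast; linarith)

end Bohr

-- If every step of length `ε * ρ / (2 * (K + 1))` multiplied `f` by more than `1 + ε`, then more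
-- than `K / ε` steps would fit in `[ρ / 2, ρ]` and `f` would grow by more than `2 ^ K`.
lemma exists_step_le_one_add_mul {f : ℝ → ℝ} (hf : Monotone f) {K : ℕ} {ρ ε : ℝ}
    (hρ : 0 < ρ) (hε : 0 < ε) (hε₁ : ε ≤ 1) (hpos : 0 < f (ρ / 2))
    (hK : f ρ ≤ 2 ^ K * f (ρ / 2)) :
    ∃ ρ' ∈ Set.Icc (ρ / 2) ρ, f (ρ' + ε * ρ / (2 * (K + 1))) ≤ (1 + ε) * f ρ' := by
  set δ := ε * ρ / (2 * (K + 1))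
  by_contra! hlt
  have growth (j : ℕ) (hj : ρ / 2 + j * δ ≤ ρ) :
      (1 + ε) ^ j * f (ρ / 2) ≤ f (ρ / 2 + j * δ) := by
    induction j with
    | zero => simp
    | succ j ih =>
      have hδ : 0 ≤ δ := by positivity
      push_cast at hj
      have hj' : ρ / 2 + j * δ ≤ ρ := by linarith
      calc (1 + ε) ^ (j + 1) * f (ρ / 2) = (1 + ε) * ((1 + ε) ^ j * f (ρ / 2)) := by ring
        _ ≤ (1 + ε) * f (ρ / 2 + j * δ) := by gcongr; exact ih hj'
        _ ≤ f (ρ / 2 + j * δ + δ) := (hlt _ ⟨le_add_of_nonneg_right (by positivity), hj'⟩).le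
        _ = f (ρ / 2 + (j + 1 : ℕ) * δ) := by congr 1; push_cast; ring
  set J := ⌊(K + 1) / ε⌋₊
  have hJ_le : (J : ℝ) ≤ (K + 1) / ε := Nat.floor_le (by positivity)
  have hJ_gt : (K : ℝ) < ε * J := by
    have h := (div_lt_iff₀ hε).1 (Nat.lt_floor_add_one ((K + 1 : ℝ) / ε))
    linarith
  have hJ : ρ / 2 + J * δ ≤ ρ := by
    have : J * δ ≤ (K + 1) / ε * δ := by gcongr
    have hδ : (K + 1) / ε * δ = ρ / 2 := by simp only [δ]; field_simp
    linarith
  have large : (2 : ℝ) ^ K < (1 + ε) ^ J := by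
    have bernoulli := rpow_one_add_le_one_add_mul_self (s := (1 : ℝ)) (by norm_num) hε.le hε₁
    rw [one_add_one_eq_two, mul_one] at bernoulli
    calc (2 : ℝ) ^ K = 2 ^ (K : ℝ) := (Real.rpow_natCast _ _).symm
      _ < 2 ^ (ε * J) := Real.rpow_lt_rpow_of_exponent_lt one_lt_two hJ_gt
      _ = (2 ^ ε) ^ J := by rw [Real.rpow_mul zero_le_two, Real.rpow_natCast]
      _ ≤ (1 + ε) ^ J := by gcongr
  exact absurd ((growth J hJ).trans (hf hJ)) (not_le.2 (hK.trans_lt (by gcongr)))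

lemma exists_regular_radius [Fintype G] {Γ : Finset (AddChar G ℂ)} {d : ℕ} (hd : 1 ≤ d)
    (hΓ : #Γ ≤ d) {ρ ε : ℝ} (hρ : 0 < ρ) (hε : 0 < ε) (hε₁ : ε ≤ 1) :
    ∃ ρ' ∈ Set.Icc (ρ / 2) ρ,
      (#(bohrSet Γ (ρ' + ε * ρ / (16 * d))) : ℝ) ≤ (1 + ε) * #(bohrSet Γ ρ') := by
  have mono : Monotone fun r ↦ (#(bohrSet Γ r) : ℝ) := fun r s h ↦
    Nat.cast_le.2 (card_le_card (bohrSet_mono h))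
  have double : (#(bohrSet Γ ρ) : ℝ) ≤ 2 ^ (7 * d) * #(bohrSet Γ (ρ / 2)) := by
    have h := bohrSet_card_double_le Γ (half_pos hρ)
    rw [mul_div_cancel₀ _ two_ne_zero] at h
    refine (Nat.cast_le.2 h).trans ?_
    rw [pow_mul]
    push_cast
    gcongr
    exact (pow_le_pow_right₀ (by norm_num) hΓ).trans_eq (by norm_num)
  obtain ⟨ρ', hρ', h⟩ :=
    exists_step_le_one_add_mul mono hρ hε hε₁ (bohrSet_card_pos (half_pos hρ).le) double
  have hd' : (1 : ℝ) ≤ d := Nat.one_le_cast.2 hd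
  have hd₁₆ : 2 * ((7 * d : ℕ) + 1 : ℝ) ≤ 16 * d := by push_cast; linarith
  exact ⟨ρ', hρ', (mono (by gcongr)).trans h⟩

/-! ### Averages over translates -/

section TranslateMean

variable {𝕜 : Type*} [RCLike 𝕜]

/-- The operator averaging a function over the translates by elements of `S`, i.e. convolution with
the normalised indicator of `-S`. Iterated averages are powers in the ring of endomorphisms. -/
noncomputable def translateMean (S : Finset G) : Module.End 𝕜 (G → 𝕜) where
  toFun f x := 𝔼 s ∈ S, f (x + s)
  map_add' f g := funext fun x ↦ expect_add_distrib S (f <| x + ·) (g <| x + ·)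
  map_smul' c f := funext fun x ↦ (smul_expect c S (f <| x + ·)).symm

lemma translateMean_apply (S : Finset G) (f : G → 𝕜) (x : G) :
    translateMean S f x = 𝔼 s ∈ S, f (x + s) := rfl

lemma translateMean_commute (S T : Finset G) :
    Commute (translateMean (𝕜 := 𝕜) S) (translateMean T) := by
  refine LinearMap.ext fun f ↦ funext fun x ↦ ?_
  simp only [Module.End.mul_apply, translateMean_apply]
  rw [expect_comm]
  exact expect_congr rfl fun t _ ↦ expect_congr rfl fun s _ ↦ by rw [add_right_comm]

lemma translateMean_ofReal (S : Finset G) (f : G → ℝ) :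
    translateMean S (fun x ↦ (f x : ℂ)) = fun x ↦ ((translateMean S f x : ℝ) : ℂ) :=
  funext fun x ↦ (Complex.ofReal_expect S (f <| x + ·)).symm

lemma translateMean_pow_ofReal (S : Finset G) (f : G → ℝ) (n : ℕ) :
    (translateMean S ^ n) (fun x ↦ (f x : ℂ)) = fun x ↦ (((translateMean S ^ n) f x : ℝ) : ℂ) := by
  induction n with
  | zero => rfl
  | succ n ih => simp only [pow_succ', Module.End.mul_apply, ih, translateMean_ofReal]

lemma sum_le_sum_translateMean_pow [DecidableEq G] {U S : Finset G} (hU : U.Nonempty) {f : G → ℝ}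
    (hf : 0 ≤ f) (n : ℕ) {B : Finset G} (hB : S - n • U ⊆ B) :
    ∑ s ∈ S, f s ≤ ∑ b ∈ B, (translateMean U ^ n) f b := by
  induction n generalizing B f with
  | zero => exact sum_le_sum_of_subset_of_nonneg (by simpa using hB) fun b _ _ ↦ hf b
  | succ n ih =>
    have shifted : ∀ u ∈ U, S - n • U ⊆ B.image (· + u) := fun u hu x hx ↦ by
      obtain ⟨s, hs, v, hv, rfl⟩ := mem_sub.1 hx
      refine mem_image.2 ⟨s - (v + u), hB (sub_mem_sub hs ?_), by abel⟩
      exact succ_nsmul U n ▸ add_mem_add hv hu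
    calc ∑ s ∈ S, f s ≤ 𝔼 u ∈ U, ∑ b ∈ B.image (· + u), (translateMean U ^ n) f b :=
          le_expect hU fun u hu ↦ ih hf (shifted u hu)
      _ = 𝔼 u ∈ U, ∑ b ∈ B, (translateMean U ^ n) f (b + u) := expect_congr rfl fun u _ ↦
          sum_image (add_left_injective u).injOn
      _ = ∑ b ∈ B, (translateMean U ^ (n + 1)) f b := by
          simp only [pow_succ', Module.End.mul_apply, translateMean_apply]
          rw [expect_sum_comm]

end TranslateMean

/-- The mean of the character `χ` over `S`: the Fourier transform of the normalised indicator
of `S`. -/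
noncomputable def charMean (S : Finset G) (χ : AddChar G ℂ) : ℂ := 𝔼 s ∈ S, χ s

lemma translateMean_character (S : Finset G) (χ : AddChar G ℂ) :
    translateMean S ⇑χ = charMean S χ • ⇑χ := by
  funext x
  simp only [translateMean_apply, AddChar.map_add_eq_mul, ← mul_expect, Pi.smul_apply, smul_eq_mul,
    charMean, mul_comm]

lemma translateMean_pow_character (S : Finset G) (χ : AddChar G ℂ) (n : ℕ) :
    (translateMean S ^ n) ⇑χ = charMean S χ ^ n • ⇑χ :=
  Module.End.HasEigenvector.pow_apply
    ⟨Module.End.mem_eigenspace_iff.2 (translateMean_character S χ),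
      fun h ↦ by simpa using congrFun h 0⟩ n

lemma charMean_one {S : Finset G} (hS : S.Nonempty) : charMean S 1 = 1 := by
  simp [charMean, hS]

section CharMean

lemma norm_charMean_le_one [Finite G] (S : Finset G) (χ : AddChar G ℂ) : ‖charMean S χ‖ ≤ 1 := by
  refine (RCLike.norm_expect_le (K := ℂ)).trans ?_
  simp only [AddChar.norm_apply]
  obtain rfl | hS := S.eq_empty_or_nonempty
  · simp
  · rw [expect_const hS]

variable [Fintype G]

open Classical in
/-- The large spectrum of `S` at level `1 / 2`. -/
noncomputable def halfSpectrum (S : Finset G) : Finset (AddChar G ℂ) :=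
  {χ | 1 / 2 ≤ ‖charMean S χ‖}

lemma mem_halfSpectrum {S : Finset G} {χ : AddChar G ℂ} :
    χ ∈ halfSpectrum S ↔ 1 / 2 ≤ ‖charMean S χ‖ := by
  simp [halfSpectrum]

lemma one_mem_halfSpectrum {S : Finset G} (hS : S.Nonempty) : 1 ∈ halfSpectrum S := by
  rw [mem_halfSpectrum, charMean_one hS, norm_one]
  exact one_half_lt_one.le

end CharMean

section MulSpan

variable {α : Type*} [CommGroup α] [Fintype α] [DecidableEq α]

lemma one_mem_mulSpan (s : Finset α) : 1 ∈ s.mulSpan :=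
  mem_mulSpan.2 ⟨0, by simp⟩

lemma zpow_mul_mem_mulSpan_insert {s : Finset α} {a b : α} (ha : a ∉ s) (hb : b ∈ s.mulSpan) {n : ℤ}
    (hn : n = -1 ∨ n = 0 ∨ n = 1) : a ^ n * b ∈ (insert a s).mulSpan := by
  obtain ⟨ε, hε, rfl⟩ := mem_mulSpan.1 hb
  refine mem_mulSpan.2 ⟨Function.update ε a n, fun c ↦ ?_, ?_⟩
  · obtain rfl | hc := eq_or_ne c a
    · simpa using hn
    · simpa [hc] using hε c
  · rw [prod_insert ha, Function.update_self]
    refine congrArg _ (prod_congr rfl fun c hc ↦ ?_)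
    rw [Function.update_of_ne (ne_of_mem_of_not_mem hc ha)]

end MulSpan

lemma norm_one_sub_mul_le {z w : ℂ} (hz : ‖z‖ = 1) : ‖1 - z * w‖ ≤ ‖1 - z‖ + ‖1 - w‖ := by
  calc ‖1 - z * w‖ = ‖(1 - z) + z * (1 - w)‖ := by ring_nf
    _ ≤ ‖1 - z‖ + ‖z * (1 - w)‖ := norm_add_le _ _
    _ = ‖1 - z‖ + ‖1 - w‖ := by rw [norm_mul, hz, one_mul]

lemma norm_one_sub_prod_le {ι : Type*} (s : Finset ι) {z : ι → ℂ} (hz : ∀ i ∈ s, ‖z i‖ = 1) :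
    ‖1 - ∏ i ∈ s, z i‖ ≤ ∑ i ∈ s, ‖1 - z i‖ := by
  classical
  induction s using Finset.induction_on with
  | empty => simp
  | insert i s hi ih =>
    rw [prod_insert hi, sum_insert hi]
    exact (norm_one_sub_mul_le (hz i (mem_insert_self i s))).trans
      (by gcongr; exact ih fun j hj ↦ hz j (mem_insert_of_mem hj))

lemma norm_one_sub_le_of_mem_mulSpan [Finite G] {Λ : Finset (AddChar G ℂ)} {ψ : AddChar G ℂ}
    (hψ : ψ ∈ Λ.mulSpan) {v : G} {ν : ℝ} (hν : 0 ≤ ν) (hv : ∀ γ ∈ Λ, ‖1 - γ v‖ ≤ ν) :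
    ‖1 - ψ v‖ ≤ #Λ * ν := by
  obtain ⟨ε, hε, rfl⟩ := mem_mulSpan.1 hψ
  rw [AddChar.prod_apply, ← nsmul_eq_mul]
  refine (norm_one_sub_prod_le Λ fun γ _ ↦ AddChar.norm_apply _ _).trans
    (sum_le_card_nsmul _ _ _ fun γ hγ ↦ ?_)
  obtain h | h | h := hε γ
  · simpa [h, AddChar.inv_apply, norm_one_sub_character_neg] using hv γ hγ
  · simpa [h] using hν
  · simpa [h] using hv γ hγ

/-! ### Chang's theorem -/

section Riesz

/-- The Riesz product with frequency set `Λ` and phases `w`. The coefficient `1 / 4` keeps every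
factor positive and makes the total Fourier mass of each factor at most `5 / 4`. -/
noncomputable def rieszProduct (w : AddChar G ℂ → ℂ) (Λ : Finset (AddChar G ℂ)) (x : G) : ℝ :=
  ∏ γ ∈ Λ, (1 + (w γ * γ x).re / 4)

variable [Finite G] {w : AddChar G ℂ → ℂ} {Λ : Finset (AddChar G ℂ)}

lemma rieszProduct_insert_mul (w : AddChar G ℂ → ℂ) {γ : AddChar G ℂ} (hγ : γ ∉ Λ)
    (χ : AddChar G ℂ) :
    (fun x ↦ (rieszProduct w (insert γ Λ) x : ℂ) * χ x) =
      (fun x ↦ (rieszProduct w Λ x : ℂ) * χ x) +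
        ((w γ / 8) • (fun x ↦ (rieszProduct w Λ x : ℂ) * (γ * χ) x) +
          (conj (w γ) / 8) • fun x ↦ (rieszProduct w Λ x : ℂ) * (γ⁻¹ * χ) x) := by
  funext x
  have hre : ((w γ * γ x).re : ℂ) = (w γ * γ x + conj (w γ) * γ⁻¹ x) / 2 := by
    rw [Complex.re_eq_add_conj, map_mul, AddChar.inv_apply, AddChar.map_neg_eq_conj]
  simp only [rieszProduct, prod_insert hγ, Pi.add_apply, Pi.smul_apply, smul_eq_mul,
    AddChar.mul_apply]
  push_cast
  rw [hre]
  ring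

lemma norm_map_rieszProduct_insert_mul_le (E : (G → ℂ) →ₗ[ℂ] ℂ) (hw : ∀ γ, ‖w γ‖ ≤ 1)
    {γ : AddChar G ℂ} (hγ : γ ∉ Λ) (χ : AddChar G ℂ) :
    ‖E fun x ↦ (rieszProduct w (insert γ Λ) x : ℂ) * χ x‖ ≤
      ‖E fun x ↦ (rieszProduct w Λ x : ℂ) * χ x‖ +
        (‖E fun x ↦ (rieszProduct w Λ x : ℂ) * (γ * χ) x‖ +
          ‖E fun x ↦ (rieszProduct w Λ x : ℂ) * (γ⁻¹ * χ) x‖) / 8 := by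
  have hw₁ : ‖w γ / 8‖ ≤ 1 / 8 := by
    rw [norm_div, Complex.norm_ofNat]
    linarith [hw γ]
  have hw₂ : ‖conj (w γ) / 8‖ ≤ 1 / 8 := by
    rw [norm_div, RCLike.norm_conj, Complex.norm_ofNat]
    linarith [hw γ]
  rw [rieszProduct_insert_mul w hγ, map_add, map_add, map_smul, map_smul]
  refine (norm_add_le _ _).trans (add_le_add_right ((norm_add_le _ _).trans ?_) _)
  rw [norm_smul, norm_smul, add_div]
  refine (add_le_add (mul_le_mul_of_nonneg_right hw₁ (norm_nonneg _))
    (mul_le_mul_of_nonneg_right hw₂ (norm_nonneg _))).trans_eq (by ring)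

lemma norm_map_rieszProduct_mul_le (E : (G → ℂ) →ₗ[ℂ] ℂ) (hw : ∀ γ, ‖w γ‖ ≤ 1) {q : ℝ}
    {χ : AddChar G ℂ} (h : ∀ ψ ∈ Λ.mulSpan, ‖E ⇑(ψ * χ)‖ ≤ q) :
    ‖E fun x ↦ (rieszProduct w Λ x : ℂ) * χ x‖ ≤ (5 / 4) ^ #Λ * q := by
  induction Λ using Finset.induction_on generalizing χ with
  | empty => simpa [rieszProduct] using h 1 (one_mem_mulSpan ∅)
  | insert γ Λ hγ ih =>
    have mem {n : ℤ} (hn : n = -1 ∨ n = 0 ∨ n = 1) {ψ : AddChar G ℂ} (hψ : ψ ∈ Λ.mulSpan) :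
        ‖E ⇑(ψ * (γ ^ n * χ))‖ ≤ q := by
      rw [mul_left_comm, ← mul_assoc]
      exact h _ (zpow_mul_mem_mulSpan_insert hγ hψ hn)
    have h₀ := ih fun ψ hψ ↦ by simpa using mem (.inr (.inl rfl)) hψ
    have h₁ := ih (χ := γ * χ) fun ψ hψ ↦ by simpa using mem (.inr (.inr rfl)) hψ
    have h₂ := ih (χ := γ⁻¹ * χ) fun ψ hψ ↦ by simpa using mem (.inl rfl) hψ
    rw [card_insert_of_notMem hγ, pow_succ]
    linarith [norm_map_rieszProduct_insert_mul_le E hw hγ χ]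

lemma norm_map_rieszProduct_insert_le (E : (G → ℂ) →ₗ[ℂ] ℂ) (hw : ∀ γ, ‖w γ‖ ≤ 1) {q : ℝ}
    {γ : AddChar G ℂ} (hγ : γ ∉ Λ)
    (h : ∀ ψ ∈ Λ.mulSpan, ‖E ⇑(γ * ψ)‖ ≤ q ∧ ‖E ⇑(γ⁻¹ * ψ)‖ ≤ q) :
    ‖E fun x ↦ (rieszProduct w (insert γ Λ) x : ℂ)‖ ≤
      ‖E fun x ↦ (rieszProduct w Λ x : ℂ)‖ + (5 / 4) ^ #Λ * q / 4 := by
  have expand := norm_map_rieszProduct_insert_mul_le E hw hγ 1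
  simp only [AddChar.one_apply, mul_one] at expand
  have h₁ := norm_map_rieszProduct_mul_le E hw (χ := γ) fun ψ hψ ↦ mul_comm ψ γ ▸ (h ψ hψ).1
  have h₂ := norm_map_rieszProduct_mul_le E hw (χ := γ⁻¹) fun ψ hψ ↦
    mul_comm ψ γ⁻¹ ▸ (h ψ hψ).2
  linarith

-- The greedy choice of frequencies in Chang's theorem, relative to the set `Δ` of characters on
-- which `E` may be large.
lemma exists_mulSpan_covering_or_rieszProduct_le (E : (G → ℂ) →ₗ[ℂ] ℂ) (hE : ‖E 1‖ ≤ 1) {q : ℝ}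
    {Δ P : Finset (AddChar G ℂ)} (hΔ : 1 ∈ Δ) (hq : ∀ χ ∉ Δ, ‖E χ‖ ≤ q) (n : ℕ) :
    (∃ Λ, #Λ ≤ n ∧ ∀ γ ∈ P, ∃ ψ ∈ Λ.mulSpan, γ * ψ ∈ Δ ∨ γ⁻¹ * ψ ∈ Δ) ∨
      ∃ Λ ⊆ P, #Λ = n ∧ ∀ w : AddChar G ℂ → ℂ, (∀ γ, ‖w γ‖ ≤ 1) →
        ‖E fun x ↦ (rieszProduct w Λ x : ℂ)‖ ≤ 1 + ((5 / 4) ^ n - 1) * q := by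
  induction n with
  | zero =>
    exact .inr ⟨∅, empty_subset P, rfl, fun w _ ↦ by simpa [rieszProduct, ← Pi.one_def] using hE⟩
  | succ n ih =>
    obtain ⟨Λ, hΛ, cover⟩ | ⟨Λ, hΛP, hΛ, bound⟩ := ih
    · exact .inl ⟨Λ, by omega, cover⟩
    by_cases! cover : ∀ γ ∈ P, ∃ ψ ∈ Λ.mulSpan, γ * ψ ∈ Δ ∨ γ⁻¹ * ψ ∈ Δ
    · exact .inl ⟨Λ, by omega, cover⟩
    obtain ⟨γ, hγP, hγ⟩ := cover
    have hγΛ : γ ∉ Λ := fun h ↦ (hγ γ (subset_mulSpan h)).2 (by rwa [inv_mul_cancel])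
    refine .inr ⟨insert γ Λ, insert_subset hγP hΛP, by rw [card_insert_of_notMem hγΛ, hΛ],
      fun w hw ↦ ?_⟩
    have step := norm_map_rieszProduct_insert_le E hw hγΛ fun ψ hψ ↦
      ⟨hq _ (hγ ψ hψ).1, hq _ (hγ ψ hψ).2⟩
    rw [hΛ] at step
    rw [pow_succ]
    linarith [bound w hw]

lemma exp_sub_le_one_add {y : ℝ} (hy : |y| ≤ 1 / 4) : Real.exp (y - 1 / 12) ≤ 1 + y := by
  have ⟨hy₁, hy₂⟩ := abs_le.1 hy
  have pos : 0 < 1 + y := by linarith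
  refine (Real.le_log_iff_exp_le pos).1 (le_trans ?_ (Real.one_sub_inv_le_log_of_pos pos))
  have h : 1 - (1 + y)⁻¹ = y / (1 + y) := by rw [eq_div_iff pos.ne']; field_simp; ring
  rw [h, le_div_iff₀ pos]
  nlinarith

lemma exp_sum_le_rieszProduct (hw : ∀ γ, ‖w γ‖ ≤ 1) (Λ : Finset (AddChar G ℂ)) (x : G) :
    Real.exp (∑ γ ∈ Λ, ((w γ * γ x).re / 4 - 1 / 12)) ≤ rieszProduct w Λ x := by
  rw [Real.exp_sum]
  refine prod_le_prod (fun γ _ ↦ (Real.exp_pos _).le) fun γ _ ↦ exp_sub_le_one_add ?_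
  have hre : |(w γ * γ x).re| ≤ 1 := (Complex.abs_re_le_norm _).trans
    (by rw [norm_mul, AddChar.norm_apply, mul_one]; exact hw γ)
  rw [abs_div, abs_of_pos (four_pos : (0 : ℝ) < 4)]
  gcongr

lemma rieszProduct_nonneg (hw : ∀ γ, ‖w γ‖ ≤ 1) (Λ : Finset (AddChar G ℂ)) :
    0 ≤ rieszProduct w Λ := fun x ↦
  (Real.exp_pos _).le.trans (exp_sum_le_rieszProduct hw Λ x)

end Riesz

lemma exp_expect_le {ι : Type*} {s : Finset ι} (hs : s.Nonempty) (f : ι → ℝ) :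
    Real.exp (𝔼 i ∈ s, f i) ≤ 𝔼 i ∈ s, Real.exp (f i) := by
  have card_ne : (#s : ℝ) ≠ 0 := Nat.cast_ne_zero.2 hs.card_ne_zero
  have jensen := convexOn_exp.map_sum_le (t := s) (w := fun _ ↦ (#s : ℝ)⁻¹) (p := f)
    (fun _ _ ↦ by positivity) (by simp [card_ne]) fun _ _ ↦ Set.mem_univ _
  simpa only [smul_eq_mul, ← mul_sum, expect_eq_sum_div_card, div_eq_inv_mul] using jensen

lemma exists_phase_re_mul_eq_norm (z : ℂ) : ∃ w : ℂ, ‖w‖ ≤ 1 ∧ (w * z).re = ‖z‖ := by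
  obtain rfl | hz := eq_or_ne z 0
  · exact ⟨0, by simp⟩
  · refine ⟨conj z / ‖z‖, by simp [div_self, hz], ?_⟩
    rw [div_mul_eq_mul_div, Complex.conj_mul', sq, mul_div_assoc,
      div_self (by simpa using hz), mul_one, Complex.ofReal_re]

/-- The mean for the smooth probability measure obtained by convolving the uniform measure on `B`
with `ℓ` copies of the uniform measure on `U`. -/
noncomputable def smoothMean (B U : Finset G) (ℓ : ℕ) : (G → ℂ) →ₗ[ℂ] ℂ :=
  LinearMap.proj 0 ∘ₗ (translateMean B * translateMean U ^ ℓ)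

lemma smoothMean_ofReal (B U : Finset G) (ℓ : ℕ) (f : G → ℝ) :
    smoothMean B U ℓ (fun x ↦ (f x : ℂ)) = (𝔼 b ∈ B, (translateMean U ^ ℓ) f b : ℝ) := by
  simp [smoothMean, translateMean_pow_ofReal, translateMean_apply]

lemma smoothMean_character (B U : Finset G) (ℓ : ℕ) (χ : AddChar G ℂ) :
    smoothMean B U ℓ χ = charMean B χ * charMean U χ ^ ℓ := by
  simp [smoothMean, translateMean_pow_character, translateMean_character, mul_comm]

lemma smoothMean_one {B U : Finset G} (hB : B.Nonempty) (hU : U.Nonempty) (ℓ : ℕ) :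
    smoothMean B U ℓ 1 = 1 := by
  have h := smoothMean_character B U ℓ 1
  rwa [charMean_one hU, charMean_one hB, one_pow, mul_one] at h

section Chang

variable [Fintype G]

lemma exists_exp_le_expect_rieszProduct {S : Finset G} (hS : S.Nonempty)
    {Λ : Finset (AddChar G ℂ)} (hΛ : Λ ⊆ halfSpectrum S) :
    ∃ w : AddChar G ℂ → ℂ, (∀ γ, ‖w γ‖ ≤ 1) ∧
      Real.exp (#Λ / 24) ≤ 𝔼 s ∈ S, rieszProduct w Λ s := by
  choose w hw hwS using fun γ : AddChar G ℂ ↦ exists_phase_re_mul_eq_norm (charMean S γ)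
  refine ⟨w, hw, ?_⟩
  have mean_re (γ : AddChar G ℂ) : 𝔼 s ∈ S, (w γ * γ s).re = ‖charMean S γ‖ := by
    rw [← Complex.re_expect, ← mul_expect]
    exact hwS γ
  calc Real.exp (#Λ / 24) = Real.exp (∑ γ ∈ Λ, ((1 / 2) / 4 - 1 / 12)) := by
        rw [sum_const, nsmul_eq_mul]; norm_num [div_eq_mul_inv]
    _ ≤ Real.exp (∑ γ ∈ Λ, (‖charMean S γ‖ / 4 - 1 / 12)) := by
        gcongr with γ hγ
        exact mem_halfSpectrum.1 (hΛ hγ)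
    _ = Real.exp (𝔼 s ∈ S, ∑ γ ∈ Λ, ((w γ * γ s).re / 4 - 1 / 12)) := by
        simp only [expect_sum_comm, expect_sub_distrib, ← expect_div, mean_re, expect_const hS]
    _ ≤ 𝔼 s ∈ S, Real.exp (∑ γ ∈ Λ, ((w γ * γ s).re / 4 - 1 / 12)) := exp_expect_le hS _
    _ ≤ 𝔼 s ∈ S, rieszProduct w Λ s := by gcongr; exact exp_sum_le_rieszProduct hw Λ _

lemma norm_smoothMean_character_le {U : Finset G} {χ : AddChar G ℂ} (hχ : χ ∉ halfSpectrum U)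
    (B : Finset G) (ℓ : ℕ) : ‖smoothMean B U ℓ χ‖ ≤ (1 / 2) ^ ℓ := by
  rw [smoothMean_character, norm_mul, norm_pow, ← one_mul ((1 / 2 : ℝ) ^ ℓ)]
  gcongr
  · exact norm_charMean_le_one B χ
  · exact (not_le.1 (mt mem_halfSpectrum.2 hχ)).le

-- Relative Chang's theorem. The Riesz product over `ℓ` independent frequencies has mean at most
-- `2` for the smooth measure on `bohrSet Γ ρ'` obtained by convolving with `ℓ` copies of
-- `bohrSet Γ σ`, but mean at least `exp (ℓ / 24)` on `S`.
lemma exists_mulSpan_covering_halfSpectrum {Γ : Finset (AddChar G ℂ)} {ρ ρ' σ : ℝ} (hσ : 0 ≤ σ)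
    {ℓ : ℕ} (hρ' : ρ + ℓ * σ ≤ ρ') {S : Finset G} (hS : S.Nonempty) (hSρ : S ⊆ bohrSet Γ ρ)
    (hcard : 2 * (#(bohrSet Γ ρ') : ℝ) < #S * Real.exp (ℓ / 24)) :
    ∃ Λ : Finset (AddChar G ℂ), #Λ ≤ ℓ ∧ ∀ γ ∈ halfSpectrum S, ∃ ψ ∈ Λ.mulSpan,
      γ * ψ ∈ halfSpectrum (bohrSet Γ σ) ∨ γ⁻¹ * ψ ∈ halfSpectrum (bohrSet Γ σ) := by
  classical
  set U := bohrSet Γ σ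
  set B := bohrSet Γ ρ'
  have hU : U.Nonempty := bohrSet_nonempty hσ
  have hSB : S - ℓ • U ⊆ B := fun x hx ↦ by
    obtain ⟨s, hs, u, hu, rfl⟩ := mem_sub.1 hx
    exact sub_mem_bohrSet (hSρ hs) (nsmul_subset_bohrSet Subset.rfl ℓ hu) hρ'
  have hB : B.Nonempty := by
    obtain ⟨s, hs⟩ := hS
    exact ⟨_, hSB (sub_mem_sub hs (nsmul_mem_nsmul (zero_mem_bohrSet hσ)))⟩
  obtain cover | ⟨Λ, hΛS, hΛ, bound⟩ := exists_mulSpan_covering_or_rieszProduct_le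
    (P := halfSpectrum S) (smoothMean B U ℓ) (by rw [smoothMean_one hB hU, norm_one])
    (one_mem_halfSpectrum hU) (fun χ hχ ↦ norm_smoothMean_character_le hχ B ℓ) ℓ
  · exact cover
  obtain ⟨w, hw, large⟩ := exists_exp_le_expect_rieszProduct hS hΛS
  have small : 𝔼 b ∈ B, (translateMean U ^ ℓ) (rieszProduct w Λ) b ≤ 2 := by
    have h := bound w hw
    rw [smoothMean_ofReal, Complex.norm_real] at h
    have h₁ : (5 / 4 : ℝ) ^ ℓ * (1 / 2) ^ ℓ ≤ 1 := by
      rw [← mul_pow]; exact pow_le_one₀ (by norm_num) (by norm_num)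
    have h₂ : (0 : ℝ) ≤ (1 / 2) ^ ℓ := by positivity
    linarith [Real.le_norm_self (𝔼 b ∈ B, (translateMean U ^ ℓ) (rieszProduct w Λ) b)]
  refine absurd hcard (not_lt.2 ?_)
  calc #S * Real.exp (ℓ / 24) ≤ #S * 𝔼 s ∈ S, rieszProduct w Λ s := by gcongr; rwa [← hΛ]
    _ ≤ ∑ b ∈ B, (translateMean U ^ ℓ) (rieszProduct w Λ) b := by
        rw [card_mul_expect]
        exact sum_le_sum_translateMean_pow hU (rieszProduct_nonneg hw Λ) ℓ hSB
    _ = #B * 𝔼 b ∈ B, (translateMean U ^ ℓ) (rieszProduct w Λ) b := (card_mul_expect B _).symm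
    _ ≤ 2 * #B := by rw [mul_comm]; gcongr

end Chang

/-! ### Sampling -/

section Sampling

variable {ι α : Type*}

lemma exp_mul_le_one_add_mul {t x : ℝ} (ht : |t| ≤ 1) (hx : x ∈ Set.Icc 0 1) :
    Real.exp (t * x) ≤ 1 + (t + t ^ 2) * x := by
  obtain ⟨hx₀, hx₁⟩ := hx
  have htx : |t * x| ≤ 1 := by
    rw [abs_mul, abs_of_nonneg hx₀]
    exact mul_le_one₀ ht hx₀ hx₁
  have taylor := (abs_le.1 (Real.abs_exp_sub_one_sub_id_le htx)).2
  nlinarith [mul_le_mul_of_nonneg_left (pow_le_of_le_one hx₀ hx₁ two_ne_zero) (sq_nonneg t)]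

lemma sum_exp_sum_piFinset_le [Fintype ι] [DecidableEq ι] {A : Finset α} (hA : A.Nonempty)
    {X : α → ℝ} (hX : ∀ a, X a ∈ Set.Icc 0 1) {t : ℝ} (ht : |t| ≤ 1) :
    ∑ a ∈ Fintype.piFinset fun _ : ι ↦ A, Real.exp (t * ∑ i, X (a i)) ≤
      #A ^ Fintype.card ι * Real.exp (Fintype.card ι * ((t + t ^ 2) * 𝔼 a ∈ A, X a)) := by
  have one : ∑ a ∈ A, Real.exp (t * X a) ≤ #A * Real.exp ((t + t ^ 2) * 𝔼 a ∈ A, X a) := by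
    rw [← card_mul_expect]
    gcongr
    calc 𝔼 a ∈ A, Real.exp (t * X a) ≤ 𝔼 a ∈ A, (1 + (t + t ^ 2) * X a) := by
          gcongr with a
          exact exp_mul_le_one_add_mul ht (hX a)
      _ = 1 + (t + t ^ 2) * 𝔼 a ∈ A, X a := by
          rw [expect_add_distrib, expect_const hA, mul_expect]
      _ ≤ Real.exp ((t + t ^ 2) * 𝔼 a ∈ A, X a) := by
          rw [add_comm]
          exact Real.add_one_le_exp _
  simp_rw [mul_sum, Real.exp_sum]
  rw [sum_prod_piFinset A fun (_ : ι) a ↦ Real.exp (t * X a), prod_const, card_univ,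
    Real.exp_nat_mul, ← mul_pow]
  exact pow_le_pow_left₀ (sum_nonneg fun _ _ ↦ (Real.exp_pos _).le) one _

variable [Fintype ι] [DecidableEq ι] {A : Finset α} {X : α → ℝ} {δ β : ℝ}

-- The deviation is measured relative to `p + β`, where `p` is the mean, so that small means are
-- approximated with small error.
lemma card_filter_lt_sum_sub_le (hA : A.Nonempty) (hX : ∀ a, X a ∈ Set.Icc 0 1) (hδ : 0 < δ)
    (hδ₁ : δ ≤ 1) (hβ : 0 ≤ β) {ε : ℝ} (hε : ε ^ 2 = 1) :
    (#{a ∈ Fintype.piFinset fun _ : ι ↦ A | δ * (𝔼 b ∈ A, X b + β) * Fintype.card ι <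
        ε * (∑ i, X (a i) - Fintype.card ι * 𝔼 b ∈ A, X b)} : ℝ) ≤
      Real.exp (-(Fintype.card ι * β * δ ^ 2 / 4)) * #A ^ Fintype.card ι := by
  set p := 𝔼 b ∈ A, X b
  set m := Fintype.card ι
  set bad : Finset (ι → α) := {a ∈ Fintype.piFinset fun _ : ι ↦ A |
    δ * (p + β) * m < ε * (∑ i, X (a i) - m * p)}
  set t := ε * δ / 2 with ht
  have ht₂ : t ^ 2 = δ ^ 2 / 4 := by rw [ht, div_pow, mul_pow, hε]; ring
  have ht₁ : |t| ≤ 1 := by rw [← sq_le_one_iff_abs_le_one, ht₂]; nlinarith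
  have lower : #bad * Real.exp (t * m * p + δ ^ 2 / 2 * (p + β) * m) ≤
      ∑ a ∈ Fintype.piFinset fun _ : ι ↦ A, Real.exp (t * ∑ i, X (a i)) := by
    rw [← nsmul_eq_mul, ← sum_const]
    refine (sum_le_sum fun a ha ↦ Real.exp_le_exp.2 ?_).trans
      (sum_le_sum_of_subset_of_nonneg (filter_subset _ _) fun _ _ _ ↦ (Real.exp_pos _).le)
    have := mul_le_mul_of_nonneg_left (mem_filter.1 ha).2.le (half_pos hδ).le
    rw [ht]
    linarith
  have main := lower.trans (sum_exp_sum_piFinset_le hA hX ht₁)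
  rw [← le_div_iff₀ (Real.exp_pos _), mul_div_assoc, ← Real.exp_sub, mul_comm] at main
  refine main.trans ?_
  have hp : 0 ≤ p := expect_nonneg fun a _ ↦ (hX a).1
  have : 0 ≤ m * p * δ ^ 2 := by positivity
  have : 0 ≤ m * β * δ ^ 2 := by positivity
  gcongr
  rw [ht₂]
  linarith

lemma card_filter_lt_abs_sum_sub_le (hA : A.Nonempty) (hX : ∀ a, X a ∈ Set.Icc 0 1) (hδ : 0 < δ)
    (hδ₁ : δ ≤ 1) (hβ : 0 ≤ β) :
    (#{a ∈ Fintype.piFinset fun _ : ι ↦ A | δ * (𝔼 b ∈ A, X b + β) * Fintype.card ι <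
        |∑ i, X (a i) - Fintype.card ι * 𝔼 b ∈ A, X b|} : ℝ) ≤
      2 * Real.exp (-(Fintype.card ι * β * δ ^ 2 / 4)) * #A ^ Fintype.card ι := by
  classical
  have upper := card_filter_lt_sum_sub_le (ι := ι) hA hX hδ hδ₁ hβ (ε := 1) (by norm_num)
  have lower := card_filter_lt_sum_sub_le (ι := ι) hA hX hδ hδ₁ hβ (ε := -1) (by norm_num)
  simp only [one_mul, neg_one_mul] at upper lower
  simp only [lt_abs, filter_or]
  refine (Nat.cast_le.2 (card_union_le _ _)).trans ?_
  push_cast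
  linarith

end Sampling

lemma card_le_two_mul_card_filter_le {α : Type*} {s : Finset α} {f : α → ℝ} {c : ℝ} (hc : 0 < c)
    (hf : ∀ a ∈ s, 0 ≤ f a) (h : 2 * ∑ a ∈ s, f a ≤ c * #s) :
    (#s : ℝ) ≤ 2 * #{a ∈ s | f a ≤ c} := by
  have markov : #{a ∈ s | ¬ f a ≤ c} * c ≤ ∑ a ∈ s, f a :=
    calc #{a ∈ s | ¬ f a ≤ c} * c = ∑ a ∈ s with ¬ f a ≤ c, c := by rw [sum_const, nsmul_eq_mul]
      _ ≤ ∑ a ∈ s with ¬ f a ≤ c, f a := sum_le_sum fun a ha ↦ (not_le.1 (mem_filter.1 ha).2).le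
      _ ≤ ∑ a ∈ s, f a := sum_le_sum_of_subset_of_nonneg (filter_subset _ _) fun a ha _ ↦ hf a ha
  have few : 2 * (#{a ∈ s | ¬ f a ≤ c} : ℝ) ≤ #s := le_of_mul_le_mul_right (by linarith) hc
  have split : (#{a ∈ s | f a ≤ c} : ℝ) + #{a ∈ s | ¬ f a ≤ c} = #s := by
    exact_mod_cast card_filter_add_card_filter_not _
  linarith

lemma card_le_two_mul_card_filter_card_le {α β : Type*} {s : Finset α} {t : Finset β}
    (r : α → β → Prop) [∀ a b, Decidable (r a b)] {ε : ℝ} (hε : 0 < ε)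
    (h : ∀ b ∈ t, (#{a ∈ s | r a b} : ℝ) ≤ ε * #s) :
    (#s : ℝ) ≤ 2 * #{a ∈ s | (#{b ∈ t | r a b} : ℝ) ≤ 2 * ε * #t} := by
  obtain rfl | ht := t.eq_empty_or_nonempty
  · have : (0 : ℝ) ≤ #s := by positivity
    simp only [filter_empty, card_empty, Nat.cast_zero, mul_zero, le_refl, filter_true]
    linarith
  have hc : 0 < 2 * ε * #t := mul_pos (by linarith) (Nat.cast_pos.2 ht.card_pos)
  refine card_le_two_mul_card_filter_le hc (fun _ _ ↦ Nat.cast_nonneg _) ?_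
  calc 2 * ∑ a ∈ s, (#{b ∈ t | r a b} : ℝ) = 2 * ∑ b ∈ t, (#{a ∈ s | r a b} : ℝ) := by
        exact_mod_cast congrArg (2 * ·) (sum_card_bipartiteAbove_eq_sum_card_bipartiteBelow r)
    _ ≤ 2 * ∑ _b ∈ t, ε * #s := by gcongr with b hb; exact h b hb
    _ = 2 * ε * #t * #s := by rw [sum_const, nsmul_eq_mul]; ring

lemma exists_card_mul_card_le_card_mul_card_filter {ι H : Type*} [AddCommGroup H] [DecidableEq H]
    {B : Finset ι} {L R : Finset H} {t : ι → H} (h : ∀ s ∈ B, ∀ a ∈ L, a + t s ∈ R) :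
    ∃ u, #B * #L ≤ #R * #{s ∈ B | u - t s ∈ L} := by
  have count : #B * #L ≤ ∑ u ∈ R, #{s ∈ B | u - t s ∈ L} := by
    have swap := sum_card_bipartiteAbove_eq_sum_card_bipartiteBelow
      (s := R) (t := B) fun u s ↦ u - t s ∈ L
    refine swap.symm ▸ card_nsmul_le_sum _ _ _ fun s hs ↦
      card_le_card_of_injOn (· + t s) (fun a ha ↦ ?_) (add_left_injective (t s)).injOn
    have ha := mem_coe.1 ha
    exact mem_filter.2 ⟨h s hs a ha, by simpa only [add_sub_cancel_right] using ha⟩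
  by_contra! small
  obtain rfl | hR := R.eq_empty_or_nonempty
  · exact (small 0).not_ge (count.trans (Nat.zero_le _))
  have lt := sum_lt_sum_of_nonempty hR fun u _ ↦ small u
  rw [← mul_sum, sum_const, smul_eq_mul] at lt
  exact (Nat.lt_of_mul_lt_mul_left lt).not_ge count

section Midpoint

variable [DecidableEq G]

/-- The proportion of `a ∈ A` whose reflection `2x - a` in `x` lies in `A` again: the normalised
number of three-term progressions in `A` with midpoint `x`. -/
noncomputable def midpointDensity (A : Finset G) (x : G) : ℝ :=
  𝔼 a ∈ A, if x + x - a ∈ A then 1 else 0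

lemma midpointDensity_nonneg (A : Finset G) (x : G) : 0 ≤ midpointDensity A x :=
  expect_nonneg fun a _ ↦ by split_ifs <;> norm_num

lemma midpointDensity_le_one (A : Finset G) (x : G) : midpointDensity A x ≤ 1 := by
  obtain rfl | hA := A.eq_empty_or_nonempty
  · simp [midpointDensity]
  · exact expect_le hA fun a _ ↦ by split_ifs <;> norm_num

/-- The sample mean over the tuple `a` approximates the midpoint density of `A` at `x` with error
at most `δ` relative to `midpointDensity A x + β`. -/
def IsGoodSample {ι : Type*} [Fintype ι] (A : Finset G) (δ β : ℝ) (a : ι → G) (x : G) : Prop :=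
  |(∑ i, if x + x - a i ∈ A then (1 : ℝ) else 0) - Fintype.card ι * midpointDensity A x| ≤
    δ * (midpointDensity A x + β) * Fintype.card ι

/-- The translation by `t` increases `f`, within `Z`, by a factor of at most `q`, apart from at most
`e` exceptional points. -/
def IsAlmostPeriod (Z : Finset G) (f : G → ℝ) (q e : ℝ) (t : G) : Prop :=
  (#{x ∈ Z | x + t ∈ Z ∧ q * f x < f (x + t)} : ℝ) ≤ e

variable {ι : Type*} [Fintype ι] {A Z : Finset G} {δ β e : ℝ}

lemma IsGoodSample.le_mul [Nonempty ι] {u : ι → G} {s s' x : G} (hδ₀ : 0 ≤ δ) (hδ : δ ≤ 1 / 3)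
    (hβ : 0 ≤ β) (h : IsGoodSample A δ β (fun i ↦ u i - (s + s)) x)
    (h' : IsGoodSample A δ β (fun i ↦ u i - (s' + s')) (x + (s - s'))) :
    midpointDensity A (x + (s - s')) + β ≤ (1 + 3 * δ) * (midpointDensity A x + β) := by
  have shift (i : ι) : x + (s - s') + (x + (s - s')) - (u i - (s' + s')) =
    x + x - (u i - (s + s)) := by abel
  have hι : (0 : ℝ) < Fintype.card ι := Nat.cast_pos.2 Fintype.card_pos
  have hF := midpointDensity_nonneg A x
  simp only [IsGoodSample, shift] at h h'
  set p := midpointDensity A x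
  set p' := midpointDensity A (x + (s - s'))
  have close : (1 - δ) * (p' + β) ≤ (1 + δ) * (p + β) := by
    refine le_of_mul_le_mul_left ?_ hι
    linarith [(abs_le.1 h).2, (abs_le.1 h').1]
  have : (1 + δ) * (p + β) ≤ (1 - δ) * ((1 + 3 * δ) * (p + β)) := by
    nlinarith [mul_nonneg hδ₀ (add_nonneg hF hβ)]
  exact le_of_mul_le_mul_left (close.trans this) (by linarith)

lemma isAlmostPeriod_of_isGoodSample [Nonempty ι] {u : ι → G} {s s' : G} (hδ₀ : 0 ≤ δ)
    (hδ : δ ≤ 1 / 3) (hβ : 0 ≤ β)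
    [∀ (a : ι → G) x, Decidable (¬ IsGoodSample A δ β a x)]
    (h : (#{x ∈ Z | ¬ IsGoodSample A δ β (fun i ↦ u i - (s + s)) x} : ℝ) ≤ e)
    (h' : (#{x ∈ Z | ¬ IsGoodSample A δ β (fun i ↦ u i - (s' + s')) x} : ℝ) ≤ e) :
    IsAlmostPeriod Z (fun x ↦ midpointDensity A x + β) (1 + 3 * δ) (2 * e) (s - s') := by
  have cover : {x ∈ Z | x + (s - s') ∈ Z ∧ (1 + 3 * δ) * (midpointDensity A x + β) <
      midpointDensity A (x + (s - s')) + β} ⊆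
        {x ∈ Z | ¬ IsGoodSample A δ β (fun i ↦ u i - (s + s)) x} ∪
          {x ∈ Z | ¬ IsGoodSample A δ β (fun i ↦ u i - (s' + s')) x}.image (· - (s - s')) := by
    intro x hx
    obtain ⟨hxZ, hxZ', lt⟩ := mem_filter.1 hx
    by_cases good : IsGoodSample A δ β (fun i ↦ u i - (s + s)) x
    · refine mem_union_right _ (mem_image.2 ⟨_, mem_filter.2 ⟨hxZ', fun good' ↦ ?_⟩,
        add_sub_cancel_right _ _⟩)
      exact lt.not_ge (good.le_mul hδ₀ hδ hβ good')
    · exact mem_union_left _ (mem_filter.2 ⟨hxZ, good⟩)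
  have count := Nat.cast_le (α := ℝ).2 <|
    (card_le_card cover).trans <| (card_union_le _ _).trans <| Nat.add_le_add_left card_image_le _
  push_cast at count
  exact count.trans (by linarith)

-- Croot and Sisask's sampling argument; the multiplicative form of the error exploits that the
-- midpoint density may be small.
lemma exists_isAlmostPeriod {A B R Z : Finset G} (hA : A.Nonempty)
    (hR : ∀ a ∈ A, ∀ s ∈ B, a + (s + s) ∈ R) {m : ℕ} (hm : 0 < m) {δ β ε : ℝ} (hδ₀ : 0 < δ)
    (hδ : δ ≤ 1 / 3) (hβ : 0 ≤ β) (hε₀ : 0 < ε)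
    (hε : 2 * Real.exp (-(m * β * δ ^ 2 / 4)) ≤ ε) :
    ∃ S ⊆ B, (#B * #A ^ m : ℝ) ≤ 2 * #S * #R ^ m ∧ ∀ s ∈ S, ∀ s' ∈ S,
      IsAlmostPeriod Z (fun x ↦ midpointDensity A x + β) (1 + 3 * δ) (4 * ε * #Z) (s - s') := by
  classical
  have := Fin.pos_iff_nonempty.1 hm
  set tuples : Finset (Fin m → G) := Fintype.piFinset fun _ ↦ A
  set good : Finset (Fin m → G) :=
    {a ∈ tuples | (#{x ∈ Z | ¬ IsGoodSample A δ β a x} : ℝ) ≤ 2 * ε * #Z}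
  have hgood : (#tuples : ℝ) ≤ 2 * #good := by
    refine card_le_two_mul_card_filter_card_le _ hε₀ fun x _ ↦ ?_
    have chernoff := card_filter_lt_abs_sum_sub_le (ι := Fin m)
      (X := fun a ↦ if x + x - a ∈ A then 1 else 0) hA
      (fun a ↦ by split_ifs <;> simp) hδ₀ (by linarith) hβ
    simp only [IsGoodSample, not_le]
    refine chernoff.trans ?_
    simp only [tuples, Fintype.card_piFinset_const, Fintype.card_fin, Nat.cast_pow]
    gcongr
  obtain ⟨u, hu⟩ := exists_card_mul_card_le_card_mul_card_filter (B := B) (L := good)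
    (R := Fintype.piFinset fun _ ↦ R) (t := fun s _ ↦ s + s) fun s hs a ha ↦
      Fintype.mem_piFinset.2 fun i ↦ hR _ (Fintype.mem_piFinset.1 (mem_filter.1 ha).1 i) s hs
  refine ⟨{s ∈ B | u - (fun _ ↦ s + s) ∈ good}, filter_subset _ _, ?_, fun s hs s' hs' ↦ ?_⟩
  · have hu' : (#B * #good : ℝ) ≤ #R ^ m * #{s ∈ B | u - (fun _ ↦ s + s) ∈ good} := by
      simpa using Nat.cast_le (α := ℝ).2 hu
    simp only [tuples, Fintype.card_piFinset_const, Nat.cast_pow] at hgood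
    calc (#B * #A ^ m : ℝ) ≤ #B * (2 * #good) := by gcongr
      _ ≤ _ := by linarith
  · have h := isAlmostPeriod_of_isGoodSample hδ₀.le hδ hβ (mem_filter.1 (mem_filter.1 hs).2).2
      (mem_filter.1 (mem_filter.1 hs').2).2
    convert h using 1
    ring

end Midpoint

/-! ### Averages over differences -/

section DifferenceMean

variable [DecidableEq G]

/-- The operator averaging a function over the translates by `s - s'` with `s, s' ∈ S`, whose
eigenvalues `‖charMean S χ‖ ^ 2` are nonnegative. -/
noncomputable def differenceMean {𝕜 : Type*} [RCLike 𝕜] (S : Finset G) : Module.End 𝕜 (G → 𝕜) :=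
  translateMean S * translateMean (-S)

lemma differenceMean_apply (S : Finset G) (f : G → ℝ) (x : G) :
    differenceMean S f x = 𝔼 s ∈ S, 𝔼 s' ∈ S, f (x + (s - s')) := by
  simp only [differenceMean, Module.End.mul_apply, translateMean_apply, expect_neg_index,
    add_assoc, sub_eq_add_neg]

lemma differenceMean_pow_ofReal (S : Finset G) (f : G → ℝ) (k : ℕ) :
    (differenceMean S ^ k) (fun x ↦ (f x : ℂ)) =
      fun x ↦ (((differenceMean S ^ k) f x : ℝ) : ℂ) := by
  simp only [differenceMean, (translateMean_commute S (-S)).mul_pow, Module.End.mul_apply,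
    translateMean_pow_ofReal]

lemma differenceMean_pow_const {S : Finset G} (hS : S.Nonempty) (c : ℝ) (k : ℕ) :
    (differenceMean S ^ k) (fun _ ↦ c) = fun _ ↦ c := by
  induction k with
  | zero => rfl
  | succ k ih =>
    rw [pow_succ', Module.End.mul_apply, ih]
    exact funext fun x ↦ by simp only [differenceMean_apply, expect_const hS]

lemma image_add_right_add_nsmul_subset {X D Z : Finset G} {k : ℕ} (h : X + (k + 1) • D ⊆ Z) {d : G}
    (hd : d ∈ D) : X.image (· + d) + k • D ⊆ Z := fun y hy ↦ by
  obtain ⟨x', hx', v, hv, rfl⟩ := mem_add.1 hy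
  obtain ⟨x, hx, rfl⟩ := mem_image.1 hx'
  rw [add_assoc]
  exact h (add_mem_add hx (succ_nsmul' D k ▸ add_mem_add hd hv))

lemma zero_mem_nsmul_sub_self {S : Finset G} (hS : S.Nonempty) (k : ℕ) : 0 ∈ k • (S - S) := by
  obtain ⟨s, hs⟩ := hS
  simpa using nsmul_mem_nsmul (n := k) (sub_mem_sub hs hs)

lemma sum_translate_le_of_isAlmostPeriod {X Z : Finset G} {f : G → ℝ} {q e M : ℝ} {t : G}
    (hq : 0 ≤ q) (hf : ∀ x, 0 ≤ f x) (hM : ∀ x, f x ≤ M) (ht : IsAlmostPeriod Z f q e t)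
    (hX : X ⊆ Z) (hXt : X.image (· + t) ⊆ Z) :
    ∑ x ∈ X, f (x + t) ≤ q * ∑ x ∈ X, f x + M * e := by
  have pointwise (x : G) : f (x + t) ≤ q * f x + M * if q * f x < f (x + t) then 1 else 0 := by
    split_ifs with h
    · linarith [hM (x + t), mul_nonneg hq (hf x)]
    · linarith
  refine (sum_le_sum fun x _ ↦ pointwise x).trans ?_
  rw [sum_add_distrib, ← mul_sum, ← mul_sum, sum_boole]
  have exceptional : (#{x ∈ X | q * f x < f (x + t)} : ℝ) ≤ e :=
    (Nat.cast_le.2 <| card_le_card fun x hx ↦ by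
      obtain ⟨hx, lt⟩ := mem_filter.1 hx
      exact mem_filter.2 ⟨hX hx, hXt (mem_image_of_mem _ hx), lt⟩).trans ht
  have := (hf t).trans (hM t)
  gcongr

lemma sum_differenceMean_pow_le {S Z : Finset G} (hS : S.Nonempty) {f : G → ℝ} {q e M : ℝ}
    (hq : 1 ≤ q) (he : 0 ≤ e) (hf : ∀ x, 0 ≤ f x) (hM : ∀ x, f x ≤ M)
    (hper : ∀ s ∈ S, ∀ s' ∈ S, IsAlmostPeriod Z f q e (s - s')) (k : ℕ) {X : Finset G}
    (hX : X + k • (S - S) ⊆ Z) :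
    ∑ x ∈ X, (differenceMean S ^ k) f x ≤ q ^ k * (∑ x ∈ X, f x + k * (M * e)) := by
  induction k generalizing X with
  | zero => simp
  | succ k ih =>
    have hXZ : X ⊆ Z := fun x hx ↦ hX <| by
      simpa only [add_zero] using add_mem_add hx (zero_mem_nsmul_sub_self hS (k + 1))
    have hMe : 0 ≤ M * e := mul_nonneg ((hf 0).trans (hM 0)) he
    simp only [pow_succ' (differenceMean S) k, Module.End.mul_apply, differenceMean_apply]
    rw [← expect_sum_comm]
    simp only [← expect_sum_comm]
    refine expect_le hS fun s hs ↦ expect_le hS fun s' hs' ↦ ?_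
    have hX' := image_add_right_add_nsmul_subset hX (sub_mem_sub hs hs')
    have hXZ' : X.image (· + (s - s')) ⊆ Z := fun x hx ↦ hX' <| by
      simpa only [add_zero] using add_mem_add hx (zero_mem_nsmul_sub_self hS k)
    have step := sum_translate_le_of_isAlmostPeriod (zero_le_one.trans hq) hf hM (hper s hs s' hs')
      hXZ hXZ'
    have iter := ih hX'
    rw [sum_image (add_left_injective _).injOn, sum_image (add_left_injective _).injOn] at iter
    calc ∑ x ∈ X, (differenceMean S ^ k) f (x + (s - s'))
        ≤ q ^ k * (∑ x ∈ X, f (x + (s - s')) + k * (M * e)) := iter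
      _ ≤ q ^ k * ((q * ∑ x ∈ X, f x + M * e) + k * (M * e)) := by gcongr
      _ = q ^ k * (q * ∑ x ∈ X, f x + 1 * ((k + 1) * (M * e))) := by ring
      _ ≤ q ^ k * (q * ∑ x ∈ X, f x + q * ((k + 1) * (M * e))) := by gcongr
      _ = q ^ (k + 1) * (∑ x ∈ X, f x + (k + 1 : ℕ) * (M * e)) := by push_cast; ring

lemma le_differenceMean_pow {S : Finset G} (hS : S.Nonempty) {f : G → ℝ} {c : ℝ} (k : ℕ) {x : G}
    (h : ∀ y ∈ k • (S - S), c ≤ f (x + y)) : c ≤ (differenceMean S ^ k) f x := by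
  induction k generalizing x with
  | zero => simpa using h 0 (by simp)
  | succ k ih =>
    rw [pow_succ', Module.End.mul_apply, differenceMean_apply]
    refine le_expect hS fun s hs ↦ le_expect hS fun s' hs' ↦ ih fun y hy ↦ ?_
    rw [add_assoc]
    exact h _ (succ_nsmul' (S - S) k ▸ add_mem_add (sub_mem_sub hs hs') hy)

end DifferenceMean

section Fourier

lemma charMean_neg [Finite G] [DecidableEq G] (S : Finset G) (χ : AddChar G ℂ) :
    charMean (-S) χ = conj (charMean S χ) := by
  simp only [charMean, expect_neg_index, map_expect, AddChar.map_neg_eq_conj]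

lemma differenceMean_pow_character [Finite G] [DecidableEq G] (S : Finset G) (χ : AddChar G ℂ)
    (k : ℕ) : (differenceMean S ^ k) ⇑χ = (‖charMean S χ‖ ^ (2 * k) : ℂ) • ⇑χ := by
  rw [differenceMean, (translateMean_commute S (-S)).mul_pow, Module.End.mul_apply,
    translateMean_pow_character, map_smul, translateMean_pow_character, smul_smul, ← mul_pow,
    charMean_neg, Complex.conj_mul', pow_mul]

lemma sum_character_sum_mul_sum [Fintype G] [DecidableEq G] (A B : Finset G) (t : G) :
    ∑ ψ : AddChar G ℂ, (∑ a ∈ A, ψ (-a)) * (∑ b ∈ B, ψ (-b)) * ψ t =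
      Fintype.card G * #{a ∈ A | t - a ∈ B} := by
  have expand (ψ : AddChar G ℂ) : (∑ a ∈ A, ψ (-a)) * (∑ b ∈ B, ψ (-b)) * ψ t =
      ∑ a ∈ A, ∑ b ∈ B, ψ (t - a - b) := by
    rw [sum_mul_sum]
    simp only [sum_mul, ← AddChar.map_add_eq_mul]
    exact sum_congr rfl fun a _ ↦ sum_congr rfl fun b _ ↦ by congr 1; abel
  have inner (a : G) : ∑ b ∈ B, ∑ ψ : AddChar G ℂ, ψ (t - a - b) =
      if t - a ∈ B then (Fintype.card G : ℂ) else 0 := by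
    simp only [AddChar.sum_apply_eq_ite, sub_eq_zero, sum_ite_eq]
  simp only [expand]
  rw [sum_comm]
  simp only [sum_comm (s := univ), inner]
  rw [← sum_filter, sum_const, nsmul_eq_mul, mul_comm]

/-- The coefficient of `ψ ^ 2` in the Fourier expansion of the midpoint density of `A`. -/
noncomputable def midpointCoeff [Fintype G] (A : Finset G) (ψ : AddChar G ℂ) : ℂ :=
  (∑ a ∈ A, ψ (-a)) ^ 2 / (Fintype.card G * #A)

lemma midpointDensity_eq_sum [Fintype G] [DecidableEq G] (A : Finset G) :
    (fun x ↦ (midpointDensity A x : ℂ)) =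
      ∑ ψ : AddChar G ℂ, midpointCoeff A ψ • ⇑(ψ ^ 2) := by
  funext x
  have hG : (Fintype.card G : ℂ) ≠ 0 := Nat.cast_ne_zero.2 Fintype.card_ne_zero
  have fourier := sum_character_sum_mul_sum A A (x + x)
  simp only [midpointDensity, expect_eq_sum_div_card, sum_boole, Finset.sum_apply, Pi.smul_apply,
    smul_eq_mul, midpointCoeff, div_mul_eq_mul_div, ← sum_div, sq, AddChar.mul_apply,
    ← AddChar.map_add_eq_mul, fourier, Complex.ofReal_div, Complex.ofReal_natCast]
  rw [mul_div_mul_left _ _ hG]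

lemma sum_norm_midpointCoeff [Fintype G] {A : Finset G} (hA : A.Nonempty) :
    ∑ ψ : AddChar G ℂ, ‖midpointCoeff A ψ‖ = 1 := by
  classical
  have parseval := sum_character_sum_mul_sum A (-A) 0
  have norm_sq (ψ : AddChar G ℂ) :
      (∑ a ∈ A, ψ (-a)) * (∑ a ∈ -A, ψ (-a)) * ψ 0 = (‖∑ a ∈ A, ψ (-a)‖ ^ 2 : ℝ) := by
    rw [AddChar.map_zero_eq_one, mul_one, Complex.ofReal_pow, ← Complex.mul_conj', map_sum,
      sum_neg_index]
    simp only [AddChar.map_neg_eq_conj, Complex.conj_conj]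
  simp only [norm_sq, ← Complex.ofReal_sum, zero_sub, mem_neg', neg_neg, filter_mem_eq_inter,
    inter_self] at parseval
  have hG : (Fintype.card G : ℝ) ≠ 0 := Nat.cast_ne_zero.2 Fintype.card_ne_zero
  have hA' : (#A : ℝ) ≠ 0 := Nat.cast_ne_zero.2 hA.card_ne_zero
  simp only [midpointCoeff, norm_div, norm_pow, norm_mul, Complex.norm_natCast, ← sum_div]
  rw [div_eq_one_iff_eq (mul_ne_zero hG hA')]
  exact_mod_cast parseval

lemma differenceMean_pow_midpointDensity_add_le [Finite G] [DecidableEq G] {A : Finset G}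
    (hA : A.Nonempty) {S : Finset G} {k : ℕ} {v : G} {ε : ℝ}
    (h : ∀ χ : AddChar G ℂ, ‖charMean S χ‖ ^ (2 * k) * ‖1 - χ v‖ ≤ ε)
    (x : G) :
    (differenceMean S ^ k) (midpointDensity A) (x + v) ≤
      (differenceMean S ^ k) (midpointDensity A) x + ε := by
  have := Fintype.ofFinite G
  have expansion (y : G) : (((differenceMean S ^ k) (midpointDensity A) y : ℝ) : ℂ) =
      ∑ ψ : AddChar G ℂ, midpointCoeff A ψ * (‖charMean S (ψ ^ 2)‖ ^ (2 * k) * (ψ ^ 2) y) := by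
    rw [← congrFun (differenceMean_pow_ofReal S (midpointDensity A) k) y, midpointDensity_eq_sum,
      map_sum]
    simp only [map_smul, differenceMean_pow_character, Finset.sum_apply, Pi.smul_apply, smul_eq_mul]
  have bound : ‖(((differenceMean S ^ k) (midpointDensity A) (x + v) -
      (differenceMean S ^ k) (midpointDensity A) x : ℝ) : ℂ)‖ ≤ ε := by
    rw [Complex.ofReal_sub, expansion, expansion, ← sum_sub_distrib]
    calc _ ≤ ∑ ψ : AddChar G ℂ, ‖midpointCoeff A ψ‖ * ε := by
          refine (norm_sum_le _ _).trans (sum_le_sum fun ψ _ ↦ ?_)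
          rw [← mul_sub, ← mul_sub, norm_mul, norm_mul, norm_pow, Complex.norm_real, norm_norm,
            norm_sub_rev, norm_character_sub, add_sub_cancel_left]
          gcongr
          exact h _
      _ = ε := by rw [← sum_mul, sum_norm_midpointCoeff hA, one_mul]
  rw [Complex.norm_real] at bound
  linarith [(Real.le_norm_self _).trans bound]

end Fourier

/-! ### Density on translates and Fourier decay -/

section Translates

variable [DecidableEq G]

/-- The proportion of `v ∈ D` with `y + e v ∈ A`, i.e. the density of `A` on the translate by `y`
of the family `e` indexed by `D`. -/
noncomputable def translateDensity {ι : Type*} (A : Finset G) (D : Finset ι) (e : ι → G) (y : G) :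
    ℝ :=
  𝔼 v ∈ D, if y + e v ∈ A then 1 else 0

lemma translateDensity_eq_card_div {ι : Type*} (A : Finset G) (D : Finset ι) (e : ι → G) (y : G) :
    translateDensity A D e y = #{v ∈ D | y + e v ∈ A} / #D := by
  rw [translateDensity, expect_eq_sum_div_card, sum_boole]

lemma sum_ite_add_mem {A X : Finset G} {w : G} (h : ∀ a ∈ A, a - w ∈ X) (f : G → ℝ) :
    ∑ z ∈ X, (if z + w ∈ A then f (z + w) else 0) = ∑ a ∈ A, f a := by
  rw [← sum_filter]
  refine sum_nbij' (· + w) (· - w) (fun z hz ↦ (mem_filter.1 hz).2) (fun a ha ↦ ?_)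
    (fun z _ ↦ add_sub_cancel_right z w) (fun a _ ↦ sub_add_cancel a w) fun _ _ ↦ rfl
  exact mem_filter.2 ⟨h a ha, (sub_add_cancel a w).symm ▸ ha⟩

lemma sum_translateDensity {ι : Type*} {A X : Finset G} {D : Finset ι} (hD : D.Nonempty)
    {e : ι → G} (h : ∀ a ∈ A, ∀ v ∈ D, a - e v ∈ X) :
    ∑ y ∈ X, translateDensity A D e y = #A := by
  simp only [translateDensity]
  rw [← expect_sum_comm]
  calc _ = 𝔼 _v ∈ D, (#A : ℝ) := expect_congr rfl fun v hv ↦ by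
        rw [sum_ite_add_mem (fun a ha ↦ h a ha v hv) fun _ ↦ 1, sum_const, nsmul_one]
    _ = #A := expect_const hD _

lemma card_mul_translateMean_translateMean_midpointDensity {A D R : Finset G}
    (h : ∀ a ∈ A, ∀ v ∈ D, a - (v + v) ∈ R) (x : G) :
    #A * translateMean D (translateMean D (midpointDensity A)) x =
      ∑ z ∈ R, translateDensity A D (fun v ↦ v + v) z *
        translateDensity A D (fun v ↦ v + v) (x + x - z) := by
  simp only [translateDensity, expect_mul_expect]
  rw [← expect_sum_comm]
  simp only [← expect_sum_comm, translateMean_apply, mul_expect]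
  refine expect_congr rfl fun v hv ↦ expect_congr rfl fun v' _ ↦ ?_
  rw [midpointDensity, card_mul_expect, ← sum_ite_add_mem (h · · v hv)]
  refine sum_congr rfl fun z _ ↦ ?_
  have reflect : x + v + v' + (x + v + v') - (z + (v + v)) = x + x - z + (v' + v') := by abel
  rw [reflect, ite_mul, one_mul, zero_mul]

-- If `g` is the density on translates, then `(M - g z) * (M - g w) ≥ 0` bounds the convolution
-- `∑ g z * g (2 * x - z)` from below by a linear expression in `g`.
lemma le_card_mul_translateMean_translateMean_midpointDensity {A D R : Finset G}
    (hD : D.Nonempty) {x : G} {M : ℝ} (hM : ∀ y, translateDensity A D (fun v ↦ v + v) y ≤ M)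
    (hR : ∀ a ∈ A, ∀ v ∈ D, a - (v + v) ∈ R)
    (hR' : ∀ a ∈ A, ∀ v ∈ D, x + x - (a - (v + v)) ∈ R) :
    M * (2 * #A - M * #R) ≤ #A * translateMean D (translateMean D (midpointDensity A)) x := by
  rw [card_mul_translateMean_translateMean_midpointDensity hR]
  have sum := sum_translateDensity hD hR
  have reflected : ∑ z ∈ R, translateDensity A D (fun v ↦ v + v) (x + x - z) = #A := by
    rw [← sum_translateDensity (X := R.image (x + x - ·)) hD fun a ha v hv ↦
      mem_image.2 ⟨_, hR' a ha v hv, sub_sub_cancel _ _⟩, sum_image sub_right_injective.injOn]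
  calc M * (2 * #A - M * #R)
      = ∑ z ∈ R, (M * translateDensity A D (fun v ↦ v + v) z +
          M * translateDensity A D (fun v ↦ v + v) (x + x - z) - M * M) := by
        rw [sum_sub_distrib, sum_add_distrib, ← mul_sum, ← mul_sum, sum, reflected, sum_const,
          nsmul_eq_mul]
        ring
    _ ≤ _ := sum_le_sum fun z _ ↦ by
        linarith [mul_nonneg (sub_nonneg.2 (hM z)) (sub_nonneg.2 (hM (x + x - z)))]

end Translates

section ProgressionCount

variable [DecidableEq G]

/-- The number of pairs `(a, b)` for which `a, b, 2b - a` is a, possibly trivial, three-term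
arithmetic progression in `A`. -/
def progressionCount (A : Finset G) : ℕ := #{p ∈ A ×ˢ A | p.2 + p.2 - p.1 ∈ A}

lemma progressionCount_le_of_injOn {H : Type*} [AddCommGroup H] [DecidableEq H] {A : Finset G}
    {A' : Finset H} {f : H → G} (hf : Set.InjOn f A') (hA : ∀ a ∈ A', f a ∈ A)
    (hfA : ∀ a ∈ A', ∀ b ∈ A', b + b - a ∈ A' → f (b + b - a) = f b + f b - f a) :
    progressionCount A' ≤ progressionCount A := by
  refine card_le_card_of_injOn (Prod.map f f) (fun p hp ↦ ?_) fun p hp q hq h ↦ ?_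
  · obtain ⟨hp, hp'⟩ := mem_filter.1 (mem_coe.1 hp)
    obtain ⟨h₁, h₂⟩ := mem_product.1 hp
    exact mem_filter.2 ⟨mem_product.2 ⟨hA _ h₁, hA _ h₂⟩, hfA _ h₁ _ h₂ hp' ▸ hA _ hp'⟩
  · obtain ⟨hp₁, hp₂⟩ := mem_product.1 (mem_filter.1 (mem_coe.1 hp)).1
    obtain ⟨hq₁, hq₂⟩ := mem_product.1 (mem_filter.1 (mem_coe.1 hq)).1
    obtain ⟨h₁, h₂⟩ := Prod.mk_inj.1 h
    exact Prod.ext (hf hp₁ hq₁ h₁) (hf hp₂ hq₂ h₂)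

lemma progressionCount_mono {A' A : Finset G} (h : A' ⊆ A) :
    progressionCount A' ≤ progressionCount A :=
  progressionCount_le_of_injOn (Set.injOn_id _) (fun _ ha ↦ h ha) fun _ _ _ _ _ ↦ rfl

lemma card_mul_sum_midpointDensity_le {A A₁ A₂ : Finset G} (h₁ : A₁ ⊆ A) (h₂ : A₂ ⊆ A) :
    #A₁ * ∑ b ∈ A₂, midpointDensity A₁ b ≤ progressionCount A := by
  simp only [midpointDensity, mul_sum, card_mul_expect]
  rw [sum_comm, ← sum_product', sum_boole]
  refine Nat.cast_le.2 (card_le_card fun p hp ↦ ?_)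
  obtain ⟨hp, hp'⟩ := mem_filter.1 hp
  obtain ⟨ha, hb⟩ := mem_product.1 hp
  exact mem_filter.2 ⟨mem_product.2 ⟨h₁ ha, h₂ hb⟩, h₁ hp'⟩

end ProgressionCount

section Spectrum

lemma norm_sum_character_le [Finite G] (A : Finset G) (χ : AddChar G ℂ) : ‖∑ a ∈ A, χ a‖ ≤ #A := by
  refine (norm_sum_le _ _).trans_eq ?_
  simp only [AddChar.norm_apply, sum_const, nsmul_one]

lemma norm_one_sub_le_of_mem_halfSpectrum [Fintype G] {U W : Finset G} {ε : ℝ} {v : G}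
    {χ : AddChar G ℂ} (hUW : U ⊆ W) (hvW : ∀ u ∈ U, u + v ∈ W) (hW : #W ≤ (1 + ε) * #U)
    (hχ : χ ∈ halfSpectrum U) : ‖1 - χ v‖ ≤ 4 * ε := by
  classical
  set V := U.image (· + v)
  have hVW : V ⊆ W := image_subset_iff.2 hvW
  have hU : U.Nonempty := by
    by_contra! h
    have : (2 : ℝ)⁻¹ ≤ 0 := by simpa [mem_halfSpectrum, charMean, h] using hχ
    linarith
  have hU₀ : (0 : ℝ) < #U := Nat.cast_pos.2 hU.card_pos
  have card_V : #V = #U := card_image_of_injective _ (add_left_injective v)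
  have sum_V : ∑ w ∈ V, χ w = χ v * ∑ u ∈ U, χ u := by
    rw [sum_image (add_left_injective v).injOn, mul_sum]
    exact sum_congr rfl fun u _ ↦ by rw [AddChar.map_add_eq_mul, mul_comm]
  have telescope : (1 - χ v) * ∑ u ∈ U, χ u = ∑ w ∈ W \ V, χ w - ∑ w ∈ W \ U, χ w := by
    rw [sum_sdiff_eq_sub hVW, sum_sdiff_eq_sub hUW, sum_V]
    ring
  have card_sdiff_U : (#(W \ U) : ℝ) ≤ ε * #U := by
    rw [cast_card_sdiff hUW]
    linarith
  have card_sdiff_V : (#(W \ V) : ℝ) ≤ ε * #U := by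
    rw [cast_card_sdiff hVW, card_V]
    linarith
  have large : #U / 2 ≤ ‖∑ u ∈ U, χ u‖ := by
    have h := mem_halfSpectrum.1 hχ
    rw [charMean, expect_eq_sum_div_card, norm_div, Complex.norm_natCast, le_div_iff₀ hU₀] at h
    linarith
  have bound : ‖1 - χ v‖ * (#U / 2) ≤ 2 * (ε * #U) := by
    calc ‖1 - χ v‖ * (#U / 2) ≤ ‖1 - χ v‖ * ‖∑ u ∈ U, χ u‖ := by gcongr
      _ = ‖∑ w ∈ W \ V, χ w - ∑ w ∈ W \ U, χ w‖ := by rw [← norm_mul, telescope]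
      _ ≤ #(W \ V) + #(W \ U) := (norm_sub_le _ _).trans
          (add_le_add (norm_sum_character_le _ _) (norm_sum_character_le _ _))
      _ ≤ 2 * (ε * #U) := by linarith
  exact le_of_mul_le_mul_right (by linarith) hU₀

lemma norm_one_sub_character_le_of_mul [Finite G] (γ ψ : AddChar G ℂ) (v : G) :
    ‖1 - γ v‖ ≤ ‖1 - (γ * ψ) v‖ + ‖1 - ψ v‖ := by
  have h : γ v = (γ * ψ) v * ψ (-v) := by
    rw [AddChar.mul_apply, mul_assoc, ← AddChar.map_add_eq_mul, add_neg_cancel,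
      AddChar.map_zero_eq_one, mul_one]
  rw [h, ← norm_one_sub_character_neg ψ v]
  exact norm_one_sub_mul_le (AddChar.norm_apply _ _)

-- Chang's theorem relative to a Bohr set: up to the spectrum of the smaller Bohr set
-- `bohrSet Γ σ`, which regularity annihilates, the large spectrum of `S` has dimension at most `ℓ`.
lemma exists_card_le_forall_halfSpectrum [Fintype G] {Γ : Finset (AddChar G ℂ)} {S : Finset G}
    {ρ ρ' σ τ ε : ℝ} {ℓ : ℕ} (hS : S.Nonempty) (hSρ : S ⊆ bohrSet Γ ρ)
    (hcard : 2 * #(bohrSet Γ ρ') < #S * Real.exp (ℓ / 24)) (hρ' : ρ + ℓ * σ ≤ ρ') (hσ : 0 ≤ σ)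
    (hτ : 0 ≤ τ) (hreg : #(bohrSet Γ (σ + τ)) ≤ (1 + ε) * #(bohrSet Γ σ)) :
    ∃ Λ : Finset (AddChar G ℂ), #Λ ≤ ℓ ∧ ∀ v ∈ bohrSet Γ τ, v ∈ bohrSet Λ τ →
      ∀ χ ∈ halfSpectrum S, ‖1 - χ v‖ ≤ 4 * ε + ℓ * τ := by
  obtain ⟨Λ, hΛ, cover⟩ := exists_mulSpan_covering_halfSpectrum hσ hρ' hS hSρ hcard
  refine ⟨Λ, hΛ, fun v hv hvΛ χ hχ ↦ ?_⟩
  obtain ⟨ψ, hψ, hχψ⟩ := cover χ hχ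
  have small_ψ : ‖1 - ψ v‖ ≤ ℓ * τ :=
    (norm_one_sub_le_of_mem_mulSpan hψ hτ (mem_bohrSet.1 hvΛ)).trans (by gcongr)
  have small (φ) (hφ : φ ∈ halfSpectrum (bohrSet Γ σ)) : ‖1 - φ v‖ ≤ 4 * ε :=
    norm_one_sub_le_of_mem_halfSpectrum (bohrSet_mono (le_add_of_nonneg_right hτ))
      (fun u hu ↦ add_mem_bohrSet hu hv le_rfl) hreg hφ
  obtain h | h := hχψ
  · exact (norm_one_sub_character_le_of_mul χ ψ v).trans (add_le_add (small _ h) small_ψ)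
  · rw [← norm_one_sub_character_neg, ← AddChar.inv_apply]
    exact (norm_one_sub_character_le_of_mul χ⁻¹ ψ v).trans (add_le_add (small _ h) small_ψ)

lemma norm_charMean_pow_mul_norm_one_sub_le [Fintype G] {S : Finset G} {v : G} {ε : ℝ} {k : ℕ}
    (hk : 2 ≤ ε * 4 ^ k) (hv : ∀ χ ∈ halfSpectrum S, ‖1 - χ v‖ ≤ ε) (χ : AddChar G ℂ) :
    ‖charMean S χ‖ ^ (2 * k) * ‖1 - χ v‖ ≤ ε := by
  by_cases hχ : χ ∈ halfSpectrum S
  · exact (mul_le_of_le_one_left (norm_nonneg _)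
      (pow_le_one₀ (norm_nonneg _) (norm_charMean_le_one S χ))).trans (hv χ hχ)
  · rw [mem_halfSpectrum, not_le] at hχ
    have le_two : ‖1 - χ v‖ ≤ 2 := by
      refine (norm_sub_le _ _).trans ?_
      rw [norm_one, AddChar.norm_apply]
      norm_num
    calc ‖charMean S χ‖ ^ (2 * k) * ‖1 - χ v‖ ≤ (1 / 2) ^ (2 * k) * 2 := by gcongr
      _ = 2 / 4 ^ k := by rw [pow_mul]; norm_num [div_pow]; ring
      _ ≤ ε := (div_le_iff₀ (by positivity)).2 hk

end Spectrum

/-! ### Few progressions -/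

/-- The constraints linking the number `k` of averages over differences, the sample size `m` and
the number `ℓ` of new frequencies in one density increment step at densities at least `η`. -/
structure IncrementParameters (η : ℝ) (k m ℓ : ℕ) : Prop where
  density_pos : 0 < η
  samples_pos : 0 < m
  frequencies_pos : 0 < ℓ
  spectral : 16 ≤ η * 4 ^ k
  sampling : 2 * Real.exp (-(m * η * (1 / (32 * k)) ^ 2 / 4)) ≤ η ^ 2 / (1200 * k)
  dimension : 5 ≤ (η / 2) ^ m * Real.exp (ℓ / 24)

lemma IncrementParameters.one_le {η : ℝ} {k m ℓ : ℕ} (h : IncrementParameters η k m ℓ) :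
    1 ≤ (k : ℝ) := by
  refine Nat.one_le_cast.2 (Nat.one_le_iff_ne_zero.2 ?_)
  rintro rfl
  exact absurd h.sampling (by norm_num)

/-- A Bohr set that grows by at most one percent when its radius grows by the factor `1 + θ`. -/
def IsRegularBohr [Fintype G] (Γ : Finset (AddChar G ℂ)) (θ ρ : ℝ) : Prop :=
  (#(bohrSet Γ (ρ + θ * ρ)) : ℝ) ≤ 101 / 100 * #(bohrSet Γ ρ)

lemma one_add_three_div_pow_le (k : ℕ) : (1 + 3 * (1 / (32 * k : ℝ))) ^ k ≤ 111 / 100 := by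
  have exponent : k * (3 * (1 / (32 * k : ℝ))) ≤ 3 / 32 := by
    obtain rfl | hk := eq_or_ne k 0
    · norm_num
    · have : (k : ℝ) ≠ 0 := Nat.cast_ne_zero.2 hk
      exact (by field_simp : _ = (3 / 32 : ℝ)).le
  calc (1 + 3 * (1 / (32 * k : ℝ))) ^ k ≤ Real.exp (3 * (1 / (32 * k))) ^ k := by
        gcongr; rw [add_comm]; exact Real.add_one_le_exp _
    _ = Real.exp (k * (3 * (1 / (32 * k)))) := (Real.exp_nat_mul _ _).symm
    _ ≤ Real.exp (3 / 32) := Real.exp_le_exp.2 exponent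
    _ ≤ 1 / (1 - 3 / 32) := Real.exp_bound_div_one_sub_of_interval (by norm_num) (by norm_num)
    _ ≤ 111 / 100 := by norm_num

section FewProgressions

variable [DecidableEq G]

lemma exists_differenceMean_pow_midpointDensity_le {A S X Z : Finset G} {α e : ℝ} {k : ℕ}
    (hS : S.Nonempty) (hX : X.Nonempty) (hXZ : X + k • (S - S) ⊆ Z) (hα : 0 ≤ α) (hα₁ : α ≤ 1)
    (he : 0 ≤ e) (hke : k * e ≤ 3 / 100 * α * #X)
    (hF : ∀ x ∈ X, midpointDensity A x ≤ α / 16)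
    (hper : ∀ s ∈ S, ∀ s' ∈ S,
      IsAlmostPeriod Z (fun x ↦ midpointDensity A x + α) (1 + 3 * (1 / (32 * k))) e (s - s')) :
    ∃ x ∈ X, (differenceMean S ^ k) (midpointDensity A) x ≤ α / 4 := by
  have split (x : G) : (differenceMean S ^ k) (fun x ↦ midpointDensity A x + α) x =
      (differenceMean S ^ k) (midpointDensity A) x + α := by
    have h := congrFun (map_add (differenceMean S ^ k) (midpointDensity A) fun _ ↦ α) x
    rwa [differenceMean_pow_const hS] at h
  have iterate := sum_differenceMean_pow_le hS (M := 2) (le_add_of_nonneg_right (by positivity)) he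
    (fun x ↦ add_nonneg (midpointDensity_nonneg A x) hα)
    (fun x ↦ by linarith [midpointDensity_le_one A x]) hper k hXZ
  have initial : ∑ x ∈ X, (midpointDensity A x + α) ≤ #X * (17 / 16 * α) := by
    rw [← nsmul_eq_mul]
    exact sum_le_card_nsmul _ _ _ fun x hx ↦ by linarith [hF x hx]
  have hαX : 0 ≤ α * #X := by positivity
  refine exists_le_of_sum_le hX ?_
  have total : ∑ x ∈ X, (differenceMean S ^ k) (midpointDensity A) x + #X * α ≤
      111 / 100 * (#X * (17 / 16 * α) + 2 * (3 / 100 * α * #X)) := by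
    calc _ = ∑ x ∈ X, (differenceMean S ^ k) (fun x ↦ midpointDensity A x + α) x := by
          simp only [split, sum_add_distrib, sum_const, nsmul_eq_mul]
      _ ≤ _ := iterate
      _ ≤ _ := by
          have h : (k * (2 * e) : ℝ) ≤ 2 * (3 / 100 * α * #X) := by linarith
          gcongr
          · exact add_nonneg (sum_nonneg fun x _ ↦ add_nonneg (midpointDensity_nonneg A x) hα)
              (by positivity)
          · exact one_add_three_div_pow_le k
  rw [sum_const, nsmul_eq_mul]
  linarith

lemma IncrementParameters.exists_isAlmostPeriod {η α : ℝ} {k m ℓ : ℕ}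
    (h : IncrementParameters η k m ℓ) (hα : η ≤ α) {A B R Z : Finset G} (hA : A.Nonempty)
    (hB : B.Nonempty) (hR : ∀ a ∈ A, ∀ s ∈ B, a + (s + s) ∈ R) (hAR : η / 2 * #R ≤ #A) :
    ∃ S ⊆ B, S.Nonempty ∧ #B * (η / 2) ^ m ≤ 2 * #S ∧ ∀ s ∈ S, ∀ s' ∈ S,
      IsAlmostPeriod Z (fun x ↦ midpointDensity A x + α) (1 + 3 * (1 / (32 * k)))
        (4 * (η ^ 2 / (1200 * k)) * #Z) (s - s') := by
  have hη := h.density_pos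
  have hk := h.one_le
  have hR₀ : (0 : ℝ) < #R := by
    obtain ⟨a, ha⟩ := hA
    obtain ⟨s, hs⟩ := hB
    exact Nat.cast_pos.2 (card_pos.2 ⟨_, hR a ha s hs⟩)
  obtain ⟨S, hSB, card_S, hper⟩ := _root_.exists_isAlmostPeriod (Z := Z) hA hR h.samples_pos
    (δ := 1 / (32 * k)) (β := α) (ε := η ^ 2 / (1200 * k)) (by positivity)
    (by rw [div_le_iff₀ (by positivity)]; linarith) (hη.le.trans hα) (by positivity)
    (le_trans (by gcongr) h.sampling)
  have dense : #B * (η / 2) ^ m ≤ (2 * #S : ℝ) := by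
    refine le_of_mul_le_mul_right ?_ (pow_pos hR₀ m)
    calc #B * (η / 2) ^ m * (#R : ℝ) ^ m = #B * (η / 2 * #R) ^ m := by rw [mul_pow, mul_assoc]
      _ ≤ #B * (#A : ℝ) ^ m := by gcongr
      _ ≤ 2 * #S * (#R : ℝ) ^ m := card_S
  refine ⟨S, hSB, card_pos.1 (Nat.cast_pos (α := ℝ).1 ?_), dense, hper⟩
  have : (0 : ℝ) < #B * (η / 2) ^ m := mul_pos (Nat.cast_pos.2 hB.card_pos) (by positivity)
  linarith

variable [Fintype G]

lemma exists_subset_bohrSet_differenceMean_le {η α θ ρ₁ ρ₂ ρ₃ : ℝ} {k m ℓ : ℕ}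
    (h : IncrementParameters η k m ℓ) (hα : η ≤ α) (hα₁ : α ≤ 1) {Γ : Finset (AddChar G ℂ)}
    (hρ₂ : 0 ≤ ρ₂) (hρ₃ : 0 ≤ ρ₃) (h₁ : IsRegularBohr Γ θ ρ₁) (h₂ : IsRegularBohr Γ θ ρ₂)
    (h₃₁ : 2 * ρ₃ ≤ θ * ρ₁) (h₃₂ : 2 * k * ρ₃ ≤ θ * ρ₂) {A₁ A₂ : Finset G}
    (hA₁ : A₁ ⊆ bohrSet Γ ρ₁) (hA₂ : A₂ ⊆ bohrSet Γ ρ₂) (hA₁₀ : A₁.Nonempty)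
    (hd₁ : 88 / 100 * α * #(bohrSet Γ ρ₁) ≤ #A₁) (hd₂ : 88 / 100 * α * #(bohrSet Γ ρ₂) ≤ #A₂)
    (few : ∑ b ∈ A₂, midpointDensity A₁ b ≤ α / 32 * #A₂) :
    ∃ S ⊆ bohrSet Γ ρ₃, S.Nonempty ∧ #(bohrSet Γ ρ₃) * (η / 2) ^ m ≤ 2 * #S ∧
      ∃ x ∈ A₂, (differenceMean S ^ k) (midpointDensity A₁) x ≤ α / 4 := by
  have hη := h.density_pos
  have hα₀ := hη.trans_le hα
  have hk := h.one_le
  have hB₂ := bohrSet_card_pos (Γ := Γ) hρ₂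
  rw [IsRegularBohr] at h₁ h₂
  obtain ⟨S, hSB, hS, card_S, hper⟩ := h.exists_isAlmostPeriod hα (B := bohrSet Γ ρ₃)
    (R := bohrSet Γ (ρ₁ + θ * ρ₁)) (Z := bohrSet Γ (ρ₂ + θ * ρ₂)) hA₁₀ (bohrSet_nonempty hρ₃)
    (fun a ha s hs ↦ add_mem_bohrSet (hA₁ ha) (add_mem_bohrSet hs hs le_rfl) (by linarith))
    (by nlinarith [mul_le_mul_of_nonneg_right hα (Nat.cast_nonneg (α := ℝ) #(bohrSet Γ ρ₁))])
  set X := {b ∈ A₂ | midpointDensity A₁ b ≤ α / 16}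
  have card_X : (#A₂ : ℝ) ≤ 2 * #X := card_le_two_mul_card_filter_le (by positivity)
    (fun b _ ↦ midpointDensity_nonneg A₁ b) (by linarith)
  have hX : 44 / 100 * α * #(bohrSet Γ ρ₂) ≤ #X := by linarith
  have hXZ : X + k • (S - S) ⊆ bohrSet Γ (ρ₂ + θ * ρ₂) := add_subset_iff.2 fun x hx y hy ↦
    add_mem_bohrSet (hA₂ (mem_filter.1 hx).1) (nsmul_subset_bohrSet (sub_subset_iff.2
      fun s hs s' hs' ↦ sub_mem_bohrSet (hSB hs) (hSB hs') le_rfl) k hy) (by linarith)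
  have exceptional : k * (4 * (η ^ 2 / (1200 * k)) * #(bohrSet Γ (ρ₂ + θ * ρ₂))) ≤
      3 / 100 * α * (#X : ℝ) :=
    calc _ = η * η / 300 * (#(bohrSet Γ (ρ₂ + θ * ρ₂)) : ℝ) := by field_simp; ring
      _ ≤ α * α / 300 * (101 / 100 * #(bohrSet Γ ρ₂)) := by gcongr
      _ ≤ 3 / 100 * α * (44 / 100 * α * #(bohrSet Γ ρ₂)) := by nlinarith [mul_pos hα₀ hα₀]
      _ ≤ 3 / 100 * α * #X := by gcongr
  obtain ⟨x, hx, small⟩ := exists_differenceMean_pow_midpointDensity_le hS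
    (card_pos.1 <| Nat.cast_pos (α := ℝ).1 <| lt_of_lt_of_le (by positivity) hX) hXZ hα₀.le hα₁
    (by positivity) exceptional (fun x hx ↦ (mem_filter.1 hx).2) hper
  exact ⟨S, hSB, hS, card_S, x, (mem_filter.1 hx).1, small⟩

end FewProgressions

/-! ### The density increment -/

/-- The radii of the nested Bohr sets in one density increment step: `A` is restricted to radii
`ρ₁` and `ρ₂`, almost periods are found at radius `ρ₃`, and passing from `σ` to `σ + τ` annihilates
the spectrum. -/
structure NestedRadii [Fintype G] (Γ : Finset (AddChar G ℂ)) (η θ : ℝ) (k ℓ : ℕ)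
    (ρ₁ ρ₂ ρ₃ σ τ : ℝ) : Prop where
  theta_le_one : θ ≤ 1
  rho₂_nonneg : 0 ≤ ρ₂
  rho₃_nonneg : 0 ≤ ρ₃
  sigma_nonneg : 0 ≤ σ
  tau_pos : 0 < τ
  rho₂_le : 8 * ρ₂ ≤ θ * ρ₁
  rho₃_le : 2 * k * ρ₃ ≤ θ * ρ₂
  sigma_le : ℓ * σ ≤ θ * ρ₃
  tau_le : τ ≤ ρ₂
  mul_tau_le : ℓ * τ ≤ η / 16
  regular₁ : IsRegularBohr Γ θ ρ₁
  regular₂ : IsRegularBohr Γ θ ρ₂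
  regular₃ : IsRegularBohr Γ θ ρ₃
  regular_sigma : #(bohrSet Γ (σ + τ)) ≤ (1 + η / 64) * #(bohrSet Γ σ)

section Increment

variable [DecidableEq G]

lemma translateMean_commute_differenceMean_pow (D S : Finset G) (k : ℕ) :
    Commute (translateMean (𝕜 := ℝ) D) (differenceMean S ^ k) :=
  ((translateMean_commute D S).mul_right (translateMean_commute D (-S))).pow_right k

variable [Fintype G] {Γ : Finset (AddChar G ℂ)} {η θ ρ₁ ρ₂ ρ₃ σ τ α : ℝ} {k m ℓ : ℕ}

lemma NestedRadii.exists_differenceMean_pow_add_le (h : IncrementParameters η k m ℓ)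
    (hρ : NestedRadii Γ η θ k ℓ ρ₁ ρ₂ ρ₃ σ τ) {A S : Finset G} (hA : A.Nonempty)
    (hS : S.Nonempty) (hSρ : S ⊆ bohrSet Γ ρ₃) (hcard : #(bohrSet Γ ρ₃) * (η / 2) ^ m ≤ 2 * #S) :
    ∃ Λ : Finset (AddChar G ℂ), #Λ ≤ ℓ ∧ ∀ v ∈ bohrSet Γ τ, v ∈ bohrSet Λ τ → ∀ x,
      (differenceMean S ^ k) (midpointDensity A) (x + v) ≤
        (differenceMean S ^ k) (midpointDensity A) x + η / 8 := by
  have hB := bohrSet_card_pos (Γ := Γ) hρ.rho₃_nonneg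
  have large : 2 * #(bohrSet Γ (ρ₃ + θ * ρ₃)) < #S * Real.exp (ℓ / 24) := by
    have := mul_le_mul_of_nonneg_left h.dimension hB.le
    have := mul_le_mul_of_nonneg_right hcard (Real.exp_pos (ℓ / 24)).le
    have := hρ.regular₃
    rw [IsRegularBohr] at this
    linarith
  obtain ⟨Λ, hΛ, annihilate⟩ := exists_card_le_forall_halfSpectrum hS hSρ large
    (add_le_add_right hρ.sigma_le ρ₃) hρ.sigma_nonneg hρ.tau_pos.le hρ.regular_sigma
  refine ⟨Λ, hΛ, fun v hv hvΛ x ↦ differenceMean_pow_midpointDensity_add_le hA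
    (norm_charMean_pow_mul_norm_one_sub_le (by linarith [h.spectral]) fun χ hχ ↦ ?_) x⟩
  linarith [annihilate v hv hvΛ χ hχ, hρ.mul_tau_le]

lemma le_differenceMean_pow_translateMean_of_translateDensity_le {A D S : Finset G}
    {x : G} (hα : 0 ≤ α) (hθ : θ ≤ 1) (hρ₂ : 0 ≤ ρ₂) (h₂₁ : 8 * ρ₂ ≤ θ * ρ₁)
    (h₁ : IsRegularBohr Γ θ ρ₁) (hA : A ⊆ bohrSet Γ ρ₁) (hA₀ : A.Nonempty)
    (hd : 88 / 100 * α * #(bohrSet Γ ρ₁) ≤ #A) (hD : D.Nonempty) (hDρ : D ⊆ bohrSet Γ ρ₂)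
    (hS : S.Nonempty) (hSρ : k • (S - S) ⊆ bohrSet Γ (θ * ρ₂)) (hx : x ∈ bohrSet Γ ρ₂)
    (hM : ∀ y, translateDensity A D (fun v ↦ v + v) y ≤ 11 / 10 * α) :
    α / 2 ≤ (differenceMean S ^ k) (translateMean D (translateMean D (midpointDensity A))) x := by
  refine le_differenceMean_pow hS k fun y hy ↦ ?_
  have hxy : x + y ∈ bohrSet Γ (2 * ρ₂) := add_mem_bohrSet hx (hSρ hy) (by nlinarith)
  have near (a) (ha : a ∈ A) (v) (hv : v ∈ D) : a - (v + v) ∈ bohrSet Γ (ρ₁ + 2 * ρ₂) :=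
    sub_mem_bohrSet (hA ha) (add_mem_bohrSet (hDρ hv) (hDρ hv) le_rfl) (by linarith)
  have lower := le_card_mul_translateMean_translateMean_midpointDensity (x := x + y)
    (R := bohrSet Γ (ρ₁ + θ * ρ₁)) hD hM
    (fun a ha v hv ↦ bohrSet_mono (by linarith) (near a ha v hv))
    (fun a ha v hv ↦ sub_mem_bohrSet (add_mem_bohrSet hxy hxy le_rfl) (near a ha v hv)
      (by linarith))
  have hA₁ : (0 : ℝ) < #A := Nat.cast_pos.2 hA₀.card_pos
  rw [IsRegularBohr] at h₁
  have hR : 11 / 10 * α * #(bohrSet Γ (ρ₁ + θ * ρ₁)) ≤ 13 / 10 * #A := by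
    nlinarith
  refine le_of_mul_le_mul_left (lower.trans' ?_) hA₁
  nlinarith [mul_nonneg hα (sub_nonneg.2 hR), mul_nonneg hα hA₁.le]

-- Were all the densities on translates small, the averages of the midpoint density would be large.
lemma NestedRadii.exists_lt_translateDensity (h : IncrementParameters η k m ℓ)
    (hρ : NestedRadii Γ η θ k ℓ ρ₁ ρ₂ ρ₃ σ τ) (hα : η ≤ α) (hα₁ : α ≤ 1) {A₁ A₂ : Finset G}
    (hA₁ : A₁ ⊆ bohrSet Γ ρ₁) (hA₂ : A₂ ⊆ bohrSet Γ ρ₂) (hA₁₀ : A₁.Nonempty)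
    (hd₁ : 88 / 100 * α * #(bohrSet Γ ρ₁) ≤ #A₁) (hd₂ : 88 / 100 * α * #(bohrSet Γ ρ₂) ≤ #A₂)
    (few : ∑ b ∈ A₂, midpointDensity A₁ b ≤ α / 32 * #A₂) :
    ∃ Λ : Finset (AddChar G ℂ), #Λ ≤ ℓ ∧ ∀ D : Finset G, D.Nonempty → D ⊆ bohrSet Γ (τ / 2) →
      D ⊆ bohrSet Λ (τ / 2) → ∃ y, 11 / 10 * α < translateDensity A₁ D (fun v ↦ v + v) y := by
  have hk := h.one_le
  have hα₀ := h.density_pos.trans_le hα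
  obtain ⟨S, hSρ, hS, card_S, x, hx, small⟩ := exists_subset_bohrSet_differenceMean_le h hα hα₁
    hρ.rho₂_nonneg hρ.rho₃_nonneg hρ.regular₁ hρ.regular₂
    (by nlinarith [hρ.rho₃_le, hρ.rho₂_le, hρ.theta_le_one, hρ.rho₂_nonneg, hρ.rho₃_nonneg])
    hρ.rho₃_le hA₁ hA₂ hA₁₀ hd₁ hd₂ few
  obtain ⟨Λ, hΛ, shift⟩ := hρ.exists_differenceMean_pow_add_le h hA₁₀ hS hSρ card_S
  refine ⟨Λ, hΛ, fun D hD hDΓ hDΛ ↦ ?_⟩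
  by_contra! hM
  have upper : (differenceMean S ^ k) (translateMean D (translateMean D (midpointDensity A₁))) x ≤
      α / 4 + η / 8 := by
    have commute := (translateMean_commute_differenceMean_pow D S k).eq
    rw [← Module.End.mul_apply, ← commute, Module.End.mul_apply, ← Module.End.mul_apply _ _
      (midpointDensity A₁), ← commute]
    simp only [Module.End.mul_apply, translateMean_apply, add_assoc]
    refine expect_le hD fun v hv ↦ expect_le hD fun w hw ↦ ?_
    refine (shift _ ?_ ?_ x).trans (by linarith)
    · exact add_mem_bohrSet (hDΓ hv) (hDΓ hw) (add_halves τ).le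
    · exact add_mem_bohrSet (hDΛ hv) (hDΛ hw) (add_halves τ).le
  have lower := le_differenceMean_pow_translateMean_of_translateDensity_le hα₀.le hρ.theta_le_one
    hρ.rho₂_nonneg hρ.rho₂_le hρ.regular₁ hA₁ hA₁₀ hd₁ hD
    (hDΓ.trans (bohrSet_mono (by linarith [hρ.tau_le, hρ.tau_pos]))) hS
    ((nsmul_subset_bohrSet (sub_subset_iff.2 fun s hs s' hs' ↦
      sub_mem_bohrSet (hSρ hs) (hSρ hs') le_rfl) k).trans
        (bohrSet_mono (by linarith [hρ.rho₃_le]))) (hA₂ hx) hM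
  linarith

end Increment

section RegularRadii

variable [Fintype G]

lemma exists_isRegularBohr {Γ : Finset (AddChar G ℂ)} {d : ℕ} (hd : 1 ≤ d) (hΓ : #Γ ≤ d) {ρ : ℝ}
    (hρ : 0 < ρ) : ∃ ρ' ∈ Set.Icc (ρ / 2) ρ, IsRegularBohr Γ (1 / (1600 * d)) ρ' := by
  obtain ⟨ρ', hρ', h⟩ := exists_regular_radius hd hΓ hρ (ε := 1 / 100) (by norm_num) (by norm_num)
  refine ⟨ρ', hρ', ?_⟩
  calc (#(bohrSet Γ (ρ' + 1 / (1600 * d) * ρ')) : ℝ)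
      ≤ #(bohrSet Γ (ρ' + 1 / 100 * ρ / (16 * d))) := by
        refine Nat.cast_le.2 (card_le_card (bohrSet_mono (add_le_add_right ?_ ρ')))
        calc 1 / (1600 * d) * ρ' ≤ 1 / (1600 * d) * ρ := by gcongr; exact hρ'.2
          _ = 1 / 100 * ρ / (16 * d) := by field_simp; norm_num
    _ ≤ (1 + 1 / 100) * #(bohrSet Γ ρ') := h
    _ = 101 / 100 * #(bohrSet Γ ρ') := by norm_num

lemma exists_card_bohrSet_add_le {Γ : Finset (AddChar G ℂ)} {d : ℕ} (hd : 1 ≤ d) (hΓ : #Γ ≤ d)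
    {η ρ : ℝ} (hη : 0 < η) (hη₁ : η ≤ 1) (hρ : 0 < ρ) : ∃ σ ∈ Set.Icc (ρ / 2) ρ,
      #(bohrSet Γ (σ + η * (1 / (1600 * d)) * ρ)) ≤ (1 + η / 64) * #(bohrSet Γ σ) := by
  obtain ⟨σ, hσ, h⟩ := exists_regular_radius hd hΓ hρ (ε := η / 64) (by positivity) (by linarith)
  refine ⟨σ, hσ, h.trans' <| Nat.cast_le.2 <| card_le_card <| bohrSet_mono <|
    add_le_add_right ?_ σ⟩
  have : (0 : ℝ) < d := Nat.cast_pos.2 hd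
  calc η * (1 / (1600 * d)) * ρ = η * ρ / d * (1 / 1600) := by field_simp
    _ ≤ η * ρ / d * (1 / 1024) := by gcongr; norm_num
    _ = η / 64 * ρ / (16 * d) := by field_simp; norm_num

lemma NestedRadii.of_le {Γ : Finset (AddChar G ℂ)} {η θ ρ₁ ρ₂ ρ₃ σ : ℝ} {k ℓ : ℕ} (hk : 0 < k)
    (hℓ : 0 < ℓ) (hη : 0 < η) (hη₁ : η ≤ 1) (hθ : 0 < θ) (hθ₁ : θ ≤ 1 / 4) (pos₂ : 0 < ρ₂)
    (pos₃ : 0 < ρ₃) (hσ : 0 ≤ σ) (le₁ : ρ₁ ≤ 2) (le₂ : ρ₂ ≤ θ * ρ₁ / 8)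
    (le₃ : ρ₃ ≤ θ * ρ₂ / (2 * k)) (le : σ ≤ θ * ρ₃ / ℓ) (regular₁ : IsRegularBohr Γ θ ρ₁)
    (regular₂ : IsRegularBohr Γ θ ρ₂) (regular₃ : IsRegularBohr Γ θ ρ₃)
    (regular : #(bohrSet Γ (σ + η * θ * (θ * ρ₃ / ℓ))) ≤ (1 + η / 64) * #(bohrSet Γ σ)) :
    NestedRadii Γ η θ k ℓ ρ₁ ρ₂ ρ₃ σ (η * θ * (θ * ρ₃ / ℓ)) := by
  have hk₀ : (1 : ℝ) ≤ k := Nat.one_le_cast.2 hk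
  have hℓ₀ : (1 : ℝ) ≤ ℓ := Nat.one_le_cast.2 hℓ
  rw [le_div_iff₀ (by positivity)] at le₃ le
  have le_one : ρ₂ ≤ 1 := by nlinarith
  have le_rho₂ : ρ₃ ≤ ρ₂ := by nlinarith
  have sq_le : θ ^ 2 ≤ 1 / 16 := by nlinarith
  have mul_tau : ℓ * (η * θ * (θ * ρ₃ / ℓ)) = θ ^ 2 * η * ρ₃ := by field_simp
  have tau_le : η * θ * (θ * ρ₃ / ℓ) ≤ ρ₂ :=
    calc η * θ * (θ * ρ₃ / ℓ) ≤ ℓ * (η * θ * (θ * ρ₃ / ℓ)) :=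
          le_mul_of_one_le_left (by positivity) hℓ₀
      _ = θ ^ 2 * η * ρ₃ := mul_tau
      _ ≤ 1 * 1 * ρ₂ := by gcongr; linarith
      _ = ρ₂ := by ring
  have mul_tau_le : ℓ * (η * θ * (θ * ρ₃ / ℓ)) ≤ η / 16 :=
    calc ℓ * (η * θ * (θ * ρ₃ / ℓ)) = θ ^ 2 * η * ρ₃ := mul_tau
      _ ≤ 1 / 16 * η * 1 := by gcongr; exact le_rho₂.trans le_one
      _ = η / 16 := by ring
  exact ⟨by linarith, pos₂.le, pos₃.le, hσ, by positivity, by linarith, by linarith, by linarith,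
    tau_le, mul_tau_le, regular₁, regular₂, regular₃, regular⟩

lemma exists_nestedRadii {Γ : Finset (AddChar G ℂ)} {d : ℕ} (hd : 1 ≤ d) (hΓ : #Γ ≤ d) {k ℓ : ℕ}
    (hk : 0 < k) (hℓ : 0 < ℓ) {η θ ρ : ℝ} (hη : 0 < η) (hη₁ : η ≤ 1) (hθ : θ = 1 / (1600 * d))
    (hρ : 0 < ρ) (hρ₂ : ρ ≤ 2) :
    ∃ ρ₁ ρ₂ ρ₃ σ τ, NestedRadii Γ η θ k ℓ ρ₁ ρ₂ ρ₃ σ τ ∧ 2 * ρ₁ ≤ θ * ρ ∧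
      η * θ ^ 5 / (256 * k * ℓ) * ρ ≤ τ := by
  have hθ₀ : 0 < θ := by rw [hθ]; positivity
  have hθ₁ : θ ≤ 1 / 4 := by
    rw [hθ]
    exact one_div_le_one_div_of_le (by norm_num) (by linarith [Nat.one_le_cast (α := ℝ).2 hd])
  obtain ⟨ρ₁, ⟨lower₁, upper₁⟩, regular₁⟩ :=
    exists_isRegularBohr hd hΓ (ρ := θ * ρ / 2) (by positivity)
  have pos₁ : 0 < ρ₁ := lt_of_lt_of_le (by positivity) lower₁
  obtain ⟨ρ₂, ⟨lower₂, upper₂⟩, regular₂⟩ :=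
    exists_isRegularBohr hd hΓ (ρ := θ * ρ₁ / 8) (by positivity)
  have pos₂ : 0 < ρ₂ := lt_of_lt_of_le (by positivity) lower₂
  obtain ⟨ρ₃, ⟨lower₃, upper₃⟩, regular₃⟩ :=
    exists_isRegularBohr hd hΓ (ρ := θ * ρ₂ / (2 * k)) (by positivity)
  have pos₃ : 0 < ρ₃ := lt_of_lt_of_le (by positivity) lower₃
  obtain ⟨σ, ⟨lower, upper⟩, regular⟩ :=
    exists_card_bohrSet_add_le hd hΓ hη hη₁ (ρ := θ * ρ₃ / ℓ) (by positivity)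
  rw [← hθ] at regular₁ regular₂ regular₃ regular
  refine ⟨ρ₁, ρ₂, ρ₃, σ, η * θ * (θ * ρ₃ / ℓ), .of_le hk hℓ hη hη₁ hθ₀ hθ₁ pos₂ pos₃
    (lower.trans' (by positivity)) (by nlinarith) upper₂ upper₃ upper regular₁ regular₂ regular₃
    regular, by linarith, ?_⟩
  calc η * θ ^ 5 / (256 * k * ℓ) * ρ
      = η * θ * (θ * (θ * (θ * (θ * ρ / 2 / 2) / 8 / 2) / (2 * k) / 2) / ℓ) := by
        field_simp; norm_num
    _ ≤ η * θ * (θ * (θ * (θ * ρ₁ / 8 / 2) / (2 * k) / 2) / ℓ) := by gcongr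
    _ ≤ η * θ * (θ * (θ * ρ₂ / (2 * k) / 2) / ℓ) := by gcongr
    _ ≤ η * θ * (θ * ρ₃ / ℓ) := by gcongr

end RegularRadii

section Iteration

variable [Fintype G]

/-- `A` is a subset of relative density at least `α` in the regular Bohr set `bohrSet Γ ρ`. -/
structure IsDenseInBohr (A : Finset G) (Γ : Finset (AddChar G ℂ)) (θ ρ α : ℝ) : Prop where
  radius_pos : 0 < ρ
  radius_le_two : ρ ≤ 2
  regular : IsRegularBohr Γ θ ρ
  subset : A ⊆ bohrSet Γ ρ
  density : α * #(bohrSet Γ ρ) ≤ #A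

variable {Γ : Finset (AddChar G ℂ)} {A : Finset G} {θ ρ α : ℝ}

lemma IsDenseInBohr.le_one (h : IsDenseInBohr A Γ θ ρ α) : α ≤ 1 := by
  refine le_of_mul_le_mul_right ?_ (bohrSet_card_pos (Γ := Γ) h.radius_pos.le)
  rw [one_mul]
  exact h.density.trans (Nat.cast_le.2 (card_le_card h.subset))

variable [DecidableEq G]

lemma IsDenseInBohr.exists_le_translateDensity_add (h : IsDenseInBohr A Γ θ ρ α) (hα : 0 ≤ α)
    (hθ : 0 ≤ θ) {B₁ B₂ : Finset G} (h₁ : B₁.Nonempty) (h₂ : B₂.Nonempty)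
    (hB₁ : B₁ ⊆ bohrSet Γ (θ * ρ)) (hB₂ : B₂ ⊆ bohrSet Γ (θ * ρ)) :
    ∃ y, 198 / 100 * α ≤
      translateDensity A B₁ (fun v ↦ v) y + translateDensity A B₂ (fun v ↦ v) y := by
  set X := bohrSet Γ (ρ + θ * ρ)
  have total {B : Finset G} (hB₀ : B.Nonempty) (hB : B ⊆ bohrSet Γ (θ * ρ)) :
      ∑ y ∈ X, translateDensity A B (fun v ↦ v) y = #A :=
    sum_translateDensity hB₀ fun a ha v hv ↦ sub_mem_bohrSet (h.subset ha) (hB hv) le_rfl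
  obtain ⟨y, -, hy⟩ := exists_le_of_sum_le (s := X) (f := fun _ ↦ 198 / 100 * α)
    (g := fun y ↦ translateDensity A B₁ (fun v ↦ v) y + translateDensity A B₂ (fun v ↦ v) y)
    (bohrSet_nonempty (by nlinarith [h.radius_pos])) <| by
      have regular := h.regular
      rw [IsRegularBohr] at regular
      rw [sum_add_distrib, total h₁ hB₁, total h₂ hB₂, sum_const, nsmul_eq_mul]
      nlinarith [h.density]
  exact ⟨y, hy⟩

lemma exists_isDenseInBohr_of_lt_translateDensity {e : G → G} (he : e.Injective)
    (hadd : ∀ a b, e (b + b - a) = e b + e b - e a) (hρ : 0 < ρ) (hρ₂ : ρ ≤ 2)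
    (hreg : IsRegularBohr Γ θ ρ) {y : G} (h : α < translateDensity A (bohrSet Γ ρ) e y) :
    ∃ A', IsDenseInBohr A' Γ θ ρ α ∧ progressionCount A' ≤ progressionCount A := by
  refine ⟨{v ∈ bohrSet Γ ρ | y + e v ∈ A}, ⟨hρ, hρ₂, hreg, filter_subset _ _, ?_⟩, ?_⟩
  · rw [translateDensity_eq_card_div, lt_div_iff₀ (bohrSet_card_pos hρ.le)] at h
    exact h.le
  · refine progressionCount_le_of_injOn (f := fun v ↦ y + e v)
      ((add_right_injective y).comp he).injOn (fun a ha ↦ (mem_filter.1 ha).2) fun a _ b _ _ ↦ ?_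
    rw [hadd]
    abel

/-- Passing to a Bohr set with at most `ℓ` more frequencies and radius at least `r`, the density
`α` of `A` grows to `11 / 10 * α` without creating three-term progressions. -/
def HasDensityIncrement (A : Finset G) (Γ : Finset (AddChar G ℂ)) (θ α : ℝ) (ℓ : ℕ) (r : ℝ) :
    Prop :=
  ∃ (Γ' : Finset (AddChar G ℂ)) (ρ' : ℝ) (A' : Finset G), #Γ' ≤ #Γ + ℓ ∧ r ≤ ρ' ∧
    IsDenseInBohr A' Γ' θ ρ' (11 / 10 * α) ∧ progressionCount A' ≤ progressionCount A

variable {η ρ₁ ρ₂ ρ₃ σ τ : ℝ} {d k m ℓ : ℕ}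

lemma HasDensityIncrement.mono {A' : Finset G} {r r' : ℝ} (h : HasDensityIncrement A' Γ θ α ℓ r)
    (count : progressionCount A' ≤ progressionCount A) (hr : r' ≤ r) :
    HasDensityIncrement A Γ θ α ℓ r' :=
  let ⟨Γ', ρ', A'', hΓ', hρ', dense, hA''⟩ := h
  ⟨Γ', ρ', A'', hΓ', hr.trans hρ', dense, hA''.trans count⟩

lemma NestedRadii.le_progressionCount_or_hasDensityIncrement (h : IncrementParameters η k m ℓ)
    (hρ : NestedRadii Γ η θ k ℓ ρ₁ ρ₂ ρ₃ σ τ) (hG : Function.Injective fun x : G ↦ x + x)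
    (hd : #Γ + ℓ ≤ d) (hθ : θ = 1 / (1600 * d)) (hτ : τ ≤ 4) (hα : η ≤ α) (hα₁ : α ≤ 1)
    {A₁ A₂ : Finset G} (h₁ : A₁ ⊆ A) (h₂ : A₂ ⊆ A) (hA₁ : A₁ ⊆ bohrSet Γ ρ₁)
    (hA₂ : A₂ ⊆ bohrSet Γ ρ₂) (hρ₁ : 0 ≤ ρ₁) (hd₁ : 88 / 100 * α * #(bohrSet Γ ρ₁) ≤ #A₁)
    (hd₂ : 88 / 100 * α * #(bohrSet Γ ρ₂) ≤ #A₂) :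
    η ^ 3 / 50 * (#(bohrSet Γ ρ₁) * #(bohrSet Γ ρ₂)) ≤ progressionCount A ∨
      HasDensityIncrement A Γ θ α ℓ (τ / 4) := by
  have hη := h.density_pos
  have hα₀ := hη.trans_le hα
  have hB₁ := bohrSet_card_pos (Γ := Γ) hρ₁
  by_cases few : ∑ b ∈ A₂, midpointDensity A₁ b ≤ α / 32 * #A₂
  · right
    have hA₁₀ : A₁.Nonempty := card_pos.1 <| Nat.cast_pos (α := ℝ).1 <|
      lt_of_lt_of_le (by positivity) hd₁
    obtain ⟨Λ, hΛ, increment⟩ :=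
      hρ.exists_lt_translateDensity h hα hα₁ hA₁ hA₂ hA₁₀ hd₁ hd₂ few
    have hΓΛ : #(Γ ∪ Λ) ≤ #Γ + ℓ := (card_union_le Γ Λ).trans (Nat.add_le_add_left hΛ _)
    obtain ⟨ρ', ⟨lower, upper⟩, regular⟩ := exists_isRegularBohr
      (le_trans (by linarith [h.frequencies_pos]) hd) (hΓΛ.trans hd) (half_pos hρ.tau_pos)
    rw [← hθ] at regular
    have pos : 0 < ρ' := by linarith [hρ.tau_pos]
    obtain ⟨y, hy⟩ := increment (bohrSet (Γ ∪ Λ) ρ') (bohrSet_nonempty pos.le)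
      ((bohrSet_anti subset_union_left).trans (bohrSet_mono upper))
      ((bohrSet_anti subset_union_right).trans (bohrSet_mono upper))
    obtain ⟨A', dense, count⟩ := exists_isDenseInBohr_of_lt_translateDensity hG
      (fun a b ↦ by abel) pos (by linarith) regular hy
    exact ⟨Γ ∪ Λ, ρ', A', hΓΛ, by linarith, dense,
      count.trans (progressionCount_mono h₁)⟩
  · left
    rw [not_le] at few
    refine (card_mul_sum_midpointDensity_le h₁ h₂).trans' ?_
    calc η ^ 3 / 50 * ((#(bohrSet Γ ρ₁) : ℝ) * #(bohrSet Γ ρ₂))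
        ≤ α ^ 3 * (88 / 100 * (88 / 100) / 32) * (#(bohrSet Γ ρ₁) * #(bohrSet Γ ρ₂)) := by
          have := pow_le_pow_left₀ hη.le hα 3
          gcongr
          linarith [pow_pos hη 3]
      _ = α / 32 * ((88 / 100 * α * #(bohrSet Γ ρ₁)) * (88 / 100 * α * #(bohrSet Γ ρ₂))) := by ring
      _ ≤ α / 32 * (#A₁ * #A₂) := by gcongr
      _ = #A₁ * (α / 32 * #A₂) := by ring
      _ ≤ #A₁ * ∑ b ∈ A₂, midpointDensity A₁ b := by gcongr

lemma IsDenseInBohr.exists_le_translateDensity_or_hasDensityIncrement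
    (h : IsDenseInBohr A Γ θ ρ α) (hα : 0 ≤ α) (hθ : 0 ≤ θ) (hρ₂ : 0 < ρ₂) (h₂₁ : ρ₂ ≤ ρ₁)
    (hρ₁ : ρ₁ ≤ 2) (hθρ : ρ₁ ≤ θ * ρ) (regular₁ : IsRegularBohr Γ θ ρ₁)
    (regular₂ : IsRegularBohr Γ θ ρ₂) (ℓ : ℕ) :
    (∃ y, 88 / 100 * α ≤ translateDensity A (bohrSet Γ ρ₁) (fun v ↦ v) y ∧
      88 / 100 * α ≤ translateDensity A (bohrSet Γ ρ₂) (fun v ↦ v) y) ∨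
      HasDensityIncrement A Γ θ α ℓ ρ₂ := by
  have increment {r : ℝ} (hr : ρ₂ ≤ r) (hr₁ : r ≤ ρ₁) (regular : IsRegularBohr Γ θ r) {y : G}
      (hy : 11 / 10 * α < translateDensity A (bohrSet Γ r) (fun v ↦ v) y) :
      HasDensityIncrement A Γ θ α ℓ ρ₂ := by
    obtain ⟨A', dense, count⟩ := exists_isDenseInBohr_of_lt_translateDensity
      Function.injective_id (fun _ _ ↦ rfl) (by linarith) (by linarith) regular hy
    exact ⟨Γ, r, A', Nat.le_add_right _ _, hr, dense, count⟩
  obtain ⟨y, hy⟩ := h.exists_le_translateDensity_add hα hθ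
    (bohrSet_nonempty (hρ₂.le.trans h₂₁)) (bohrSet_nonempty hρ₂.le) (bohrSet_mono hθρ)
    (bohrSet_mono (h₂₁.trans hθρ))
  by_cases high₁ : 11 / 10 * α < translateDensity A (bohrSet Γ ρ₁) (fun v ↦ v) y
  · exact .inr (increment h₂₁ le_rfl regular₁ high₁)
  by_cases high₂ : 11 / 10 * α < translateDensity A (bohrSet Γ ρ₂) (fun v ↦ v) y
  · exact .inr (increment le_rfl h₂₁ regular₂ high₂)
  exact .inl ⟨y, by linarith, by linarith⟩

lemma IsDenseInBohr.le_progressionCount_or_hasDensityIncrement (hA : IsDenseInBohr A Γ θ ρ α)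
    (h : IncrementParameters η k m ℓ) (hG : Function.Injective fun x : G ↦ x + x)
    (hd : #Γ + ℓ ≤ d) (hθ : θ = 1 / (1600 * d)) (hα : η ≤ α) :
    η ^ 3 / 50 * #(bohrSet Γ (η * θ ^ 5 / (1024 * k * ℓ) * ρ)) ^ 2 ≤ progressionCount A ∨
      HasDensityIncrement A Γ θ α ℓ (η * θ ^ 5 / (1024 * k * ℓ) * ρ) := by
  have hη := h.density_pos
  have hd₁ : 1 ≤ d := by linarith [h.frequencies_pos]
  have hθ₀ : 0 < θ := by rw [hθ]; positivity
  obtain ⟨ρ₁, ρ₂, ρ₃, σ, τ, hρ, upper, lower⟩ := exists_nestedRadii hd₁ (by linarith)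
    (Nat.one_le_cast.1 h.one_le) h.frequencies_pos hη (hα.trans hA.le_one) hθ hA.radius_pos
    hA.radius_le_two
  have radius_le : η * θ ^ 5 / (1024 * k * ℓ) * ρ ≤ τ / 4 := by
    calc _ = η * θ ^ 5 / (256 * k * ℓ) * ρ / 4 := by ring
      _ ≤ τ / 4 := by gcongr
  have tau_pos := hρ.tau_pos
  have le₂ := hρ.tau_le
  have le₁ : ρ₂ ≤ ρ₁ := by nlinarith [hρ.rho₂_le, hρ.theta_le_one]
  have le₀ : ρ₁ ≤ 2 := by nlinarith [hρ.theta_le_one, hA.radius_le_two, hA.radius_pos]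
  obtain ⟨y, dense₁, dense₂⟩ | increment :=
    hA.exists_le_translateDensity_or_hasDensityIncrement (by linarith) hθ₀.le (by linarith) le₁ le₀
      (by linarith) hρ.regular₁ hρ.regular₂ ℓ
  · have count : progressionCount {v | y + v ∈ A} ≤ progressionCount A :=
      progressionCount_le_of_injOn (f := fun v ↦ y + v) (add_right_injective y).injOn
        (fun a ha ↦ (mem_filter.1 ha).2) fun a _ b _ _ ↦ by abel
    rw [translateDensity_eq_card_div, le_div_iff₀ (bohrSet_card_pos (by linarith))] at dense₁ dense₂
    refine (hρ.le_progressionCount_or_hasDensityIncrement h hG hd hθ (by linarith) hα hA.le_one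
      (A := {v | y + v ∈ A}) (filter_subset_filter _ (subset_univ _))
      (filter_subset_filter _ (subset_univ _)) (filter_subset _ _) (filter_subset _ _)
      (by linarith) dense₁ dense₂).imp (fun large ↦ ?_) fun increment ↦ ?_
    · rw [sq]
      refine le_trans ?_ (large.trans (Nat.cast_le.2 count))
      gcongr <;> exact bohrSet_mono (by linarith)
    · exact increment.mono count radius_le
  · exact .inr (increment.mono le_rfl (by linarith))

lemma IsDenseInBohr.exists_le_progressionCount (h : IncrementParameters η k m ℓ)
    (hG : Function.Injective fun x : G ↦ x + x) (hθ : θ = 1 / (1600 * d)) {c : ℝ} (hc : 0 ≤ c)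
    (hc₁ : c ≤ 1) (hcη : c ≤ η * θ ^ 5 / (1024 * k * ℓ)) {n : ℕ} (hA : IsDenseInBohr A Γ θ ρ α)
    (hα : η ≤ α) (hn : 1 < (11 / 10) ^ n * α) (hd : #Γ + n * ℓ ≤ d) :
    ∃ Γ' : Finset (AddChar G ℂ), #Γ' ≤ d ∧
      η ^ 3 / 50 * #(bohrSet Γ' (c ^ n * ρ)) ^ 2 ≤ progressionCount A := by
  have hη := h.density_pos
  induction n generalizing A Γ ρ α with
  | zero => exact absurd hA.le_one (by simpa using hn)
  | succ n ih =>
    have radius_le {r : ℝ} (hr : c * ρ ≤ r) : c ^ (n + 1) * ρ ≤ c ^ n * r := by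
      rw [pow_succ, mul_assoc]
      gcongr
    rw [add_one_mul] at hd
    have hcρ : c * ρ ≤ η * θ ^ 5 / (1024 * k * ℓ) * ρ :=
      mul_le_mul_of_nonneg_right hcη hA.radius_pos.le
    obtain large | ⟨Γ', ρ', A', card_Γ', hρ', dense, count⟩ :=
      hA.le_progressionCount_or_hasDensityIncrement h hG (by lia) hθ hα
    · refine ⟨Γ, by lia, large.trans' ?_⟩
      gcongr
      refine bohrSet_mono ((radius_le hcρ).trans (mul_le_of_le_one_left ?_ (pow_le_one₀ hc hc₁)))
      exact (mul_nonneg hc hA.radius_pos.le).trans hcρ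
    · obtain ⟨Δ, hΔ, large⟩ := ih dense (by linarith) (by rwa [← mul_assoc, ← pow_succ])
        (by lia)
      refine ⟨Δ, hΔ, le_trans ?_ (large.trans (Nat.cast_le.2 count))⟩
      gcongr
      exact bohrSet_mono (radius_le (hcρ.trans hρ'))

end Iteration

/-! ### Choice of parameters -/

section Parameters

variable {u : ℝ} {k m ℓ n κ : ℕ}

lemma two_pow_le_exp (n : ℕ) : (2 : ℝ) ^ n ≤ Real.exp n := by
  rw [← mul_one (n : ℝ), Real.exp_nat_mul]
  gcongr
  linarith [Real.exp_one_gt_d9]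

lemma le_exp_mul_four_pow (hu : 1 ≤ u) (hk : 4 * u ≤ k) : 16 ≤ Real.exp (1 - u) * 4 ^ k :=
  calc (16 : ℝ) = 2 ^ 4 := by norm_num
    _ ≤ Real.exp (4 : ℕ) := two_pow_le_exp 4
    _ ≤ Real.exp (1 - u + k) := Real.exp_le_exp.2 (by push_cast; linarith)
    _ = Real.exp (1 - u) * Real.exp 1 ^ k := by rw [Real.exp_add, ← Real.exp_nat_mul, mul_one]
    _ ≤ Real.exp (1 - u) * 4 ^ k := by gcongr; linarith [Real.exp_one_lt_d9]

lemma two_mul_exp_neg_sampling_le (hu : 1 ≤ u) (hk₀ : 0 < k) (hk : k ≤ 5 * u)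
    (hm : 2000000 * u ^ 3 * Real.exp (u - 1) ≤ m) :
    2 * Real.exp (-(m * Real.exp (1 - u) * (1 / (32 * k)) ^ 2 / 4)) ≤
      Real.exp (1 - u) ^ 2 / (1200 * k) := by
  have : (0 : ℝ) < k := Nat.cast_pos.2 hk₀
  have exponent : 19 * u ≤ m * Real.exp (1 - u) * (1 / (32 * k)) ^ 2 / 4 := by
    have cancel : Real.exp (u - 1) * Real.exp (1 - u) = 1 := by rw [← Real.exp_add]; simp
    calc 19 * u ≤ 2000000 * u ^ 3 * 1 * (1 / (32 * (5 * u))) ^ 2 / 4 := by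
          field_simp
          norm_num
      _ = 2000000 * u ^ 3 * Real.exp (u - 1) * Real.exp (1 - u) * (1 / (32 * (5 * u))) ^ 2 / 4 := by
          rw [mul_assoc _ (Real.exp (u - 1)), cancel]
      _ ≤ m * Real.exp (1 - u) * (1 / (32 * k)) ^ 2 / 4 := by gcongr
  rw [le_div_iff₀ (by positivity)]
  calc 2 * Real.exp (-(m * Real.exp (1 - u) * (1 / (32 * k)) ^ 2 / 4)) * (1200 * k)
      ≤ 2 * Real.exp (-(19 * u)) * (1200 * (5 * u)) := by gcongr
    _ = 12000 * u * Real.exp (-(19 * u)) := by ring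
    _ ≤ Real.exp (16 : ℕ) * Real.exp u * Real.exp (-(19 * u)) := by
        gcongr
        · exact (two_pow_le_exp 16).trans' (by norm_num)
        · linarith [Real.add_one_le_exp u]
    _ = Real.exp (16 + u - 19 * u) := by simp [← Real.exp_add, sub_eq_add_neg]
    _ ≤ Real.exp (2 * (1 - u)) := Real.exp_le_exp.2 (by linarith)
    _ = Real.exp (1 - u) ^ 2 := by rw [← Real.exp_nat_mul]; norm_num

lemma five_le_half_exp_pow_mul_exp (hu : 1 ≤ u) (hm : 0 < m) (hℓ : 96 * m * u ≤ ℓ) :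
    5 ≤ (Real.exp (1 - u) / 2) ^ m * Real.exp (ℓ / 24) := by
  have hm₁ : (1 : ℝ) ≤ m := Nat.one_le_cast.2 hm
  have base : Real.exp (-u) ≤ Real.exp (1 - u) / 2 := by
    rw [sub_eq_add_neg, Real.exp_add]
    linarith [mul_le_mul_of_nonneg_right Real.exp_one_gt_d9.le (Real.exp_pos (-u)).le,
      Real.exp_pos (-u)]
  calc (5 : ℝ) ≤ 2 ^ 3 := by norm_num
    _ ≤ Real.exp (3 : ℕ) := two_pow_le_exp 3
    _ ≤ Real.exp (m * -u + ℓ / 24) := Real.exp_le_exp.2 (by push_cast; nlinarith)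
    _ = Real.exp (-u) ^ m * Real.exp (ℓ / 24) := by rw [Real.exp_add, Real.exp_nat_mul]
    _ ≤ (Real.exp (1 - u) / 2) ^ m * Real.exp (ℓ / 24) := by gcongr

lemma one_lt_eleven_tenths_pow_mul_exp (hn : 11 * u ≤ n) :
    1 < (11 / 10) ^ n * Real.exp (1 - u) := by
  have base : Real.exp (1 / 11) ≤ 11 / 10 :=
    (Real.exp_bound_div_one_sub_of_interval (by norm_num) (by norm_num)).trans (by norm_num)
  calc 1 < Real.exp (n * (1 / 11) + (1 - u)) := Real.one_lt_exp_iff.2 (by linarith)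
    _ = Real.exp (1 / 11) ^ n * Real.exp (1 - u) := by rw [Real.exp_add, Real.exp_nat_mul]
    _ ≤ (11 / 10) ^ n * Real.exp (1 - u) := by gcongr

lemma half_pow_le_radius_factor (hu : 1 ≤ u) (hk₀ : 0 < k) (hk : k ≤ 5 * u) (hℓ₀ : 0 < ℓ)
    (hℓ : ℓ ≤ 300000000 * u ^ 4 * Real.exp (u - 1)) (hn₀ : 0 < n) (hn : n ≤ 12 * u)
    (hκ : 600 * u ≤ κ) :
    (1 / 2) ^ κ ≤
      Real.exp (1 - u) * (1 / (1600 * (n * ℓ : ℕ))) ^ 5 / (1024 * k * ℓ) := by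
  set q := Real.exp (u - 1)
  have hq : 0 < q := Real.exp_pos _
  have huq : u ≤ q := by linarith [Real.add_one_le_exp (u - 1)]
  have exp_eq : Real.exp (1 - u) = q⁻¹ := by rw [← Real.exp_neg, neg_sub]
  have pow_q : q ^ 37 = Real.exp (37 * (u - 1)) := by rw [← Real.exp_nat_mul]; norm_num
  have base : Real.exp (1 / 2) ≤ 2 :=
    (Real.exp_bound_div_one_sub_of_interval (by norm_num) (by norm_num)).trans (by norm_num)
  have bound : q * (1600 * (n * ℓ : ℕ)) ^ 5 * (1024 * k * ℓ) ≤ (2 : ℝ) ^ κ := by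
    push_cast
    calc q * (1600 * (n * ℓ)) ^ 5 * (1024 * k * ℓ)
        ≤ q * (1600 * (12 * q * (300000000 * q ^ 4 * q))) ^ 5 *
          (1024 * (5 * q) * (300000000 * q ^ 4 * q)) := by
          have hℓ' : ℓ ≤ 300000000 * q ^ 4 * q := hℓ.trans (by gcongr)
          have hn' : n ≤ 12 * q := hn.trans (by gcongr)
          have hk' : k ≤ 5 * q := hk.trans (by gcongr)
          gcongr
      _ ≤ 2 ^ 256 * q ^ 37 := by
          ring_nf
          gcongr
          norm_num
      _ ≤ Real.exp (256 : ℕ) * Real.exp (37 * (u - 1)) := by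
          rw [pow_q]; gcongr; exact two_pow_le_exp 256
      _ ≤ Real.exp (κ * (1 / 2)) := by
          rw [← Real.exp_add]; exact Real.exp_le_exp.2 (by push_cast; linarith)
      _ = Real.exp (1 / 2) ^ κ := Real.exp_nat_mul _ _
      _ ≤ 2 ^ κ := by gcongr
  have : (0 : ℝ) < (n * ℓ : ℕ) := Nat.cast_pos.2 (Nat.mul_pos hn₀ hℓ₀)
  calc (1 / 2 : ℝ) ^ κ = 1 / 2 ^ κ := one_div_pow 2 κ
    _ ≤ 1 / (q * (1600 * (n * ℓ : ℕ)) ^ 5 * (1024 * k * ℓ)) := by gcongr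
    _ = _ := by rw [exp_eq]; field_simp

lemma exists_incrementParameters (hu : 1 ≤ u) :
    ∃ k m ℓ n κ : ℕ, IncrementParameters (Real.exp (1 - u)) k m ℓ ∧
      1 < (11 / 10) ^ n * Real.exp (1 - u) ∧
      (1 / 2) ^ κ ≤ Real.exp (1 - u) * (1 / (1600 * (n * ℓ : ℕ))) ^ 5 / (1024 * k * ℓ) ∧
      n * ℓ * (κ * n) ≤ 10 ^ 14 * (u ^ 7 * Real.exp (u - 1)) := by
  have ceil_le {x y : ℝ} (hx : 0 ≤ x) (hxy : x + 1 ≤ y) : ⌈x⌉₊ ≤ y :=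
    (Nat.ceil_lt_add_one hx).le.trans hxy
  have hq : 1 ≤ Real.exp (u - 1) := Real.one_le_exp (by linarith)
  have huq {j : ℕ} : 1 ≤ u ^ j * Real.exp (u - 1) := one_le_mul_of_one_le_of_one_le
    (one_le_pow₀ hu) hq
  set k := ⌈4 * u⌉₊
  set m := ⌈2000000 * u ^ 3 * Real.exp (u - 1)⌉₊
  set ℓ := ⌈96 * m * u⌉₊
  set n := ⌈11 * u⌉₊
  set κ := ⌈600 * u⌉₊
  have hk₀ : 0 < k := Nat.ceil_pos.2 (by positivity)
  have hm₀ : 0 < m := Nat.ceil_pos.2 (by positivity)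
  have hℓ₀ : 0 < ℓ := Nat.ceil_pos.2 (by positivity)
  have hn₀ : 0 < n := Nat.ceil_pos.2 (by positivity)
  have hk : k ≤ 5 * u := ceil_le (by positivity) (by linarith)
  have hm : m ≤ 3000000 * u ^ 3 * Real.exp (u - 1) :=
    ceil_le (by positivity) (by linarith [huq (j := 3)])
  have hℓ : ℓ ≤ 300000000 * u ^ 4 * Real.exp (u - 1) := by
    refine ceil_le (by positivity) ?_
    linarith [huq (j := 4), mul_le_mul_of_nonneg_right hm (zero_le_one.trans hu)]
  have hn : n ≤ 12 * u := ceil_le (by positivity) (by linarith)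
  have hκ : κ ≤ 601 * u := ceil_le (by positivity) (by linarith)
  refine ⟨k, m, ℓ, n, κ, ⟨Real.exp_pos _, hm₀, hℓ₀, le_exp_mul_four_pow hu (Nat.le_ceil _),
    two_mul_exp_neg_sampling_le hu hk₀ hk (Nat.le_ceil _),
    five_le_half_exp_pow_mul_exp hu hm₀ (Nat.le_ceil _)⟩,
    one_lt_eleven_tenths_pow_mul_exp (Nat.le_ceil _),
    half_pow_le_radius_factor hu hk₀ hk hℓ₀ hℓ hn₀ hn (Nat.le_ceil _), ?_⟩
  calc (n * ℓ * (κ * n) : ℝ)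
      ≤ 12 * u * (300000000 * u ^ 4 * Real.exp (u - 1)) * (601 * u * (12 * u)) := by gcongr
    _ = 12 * 300000000 * 601 * 12 * (u ^ 7 * Real.exp (u - 1)) := by ring
    _ ≤ 10 ^ 14 * (u ^ 7 * Real.exp (u - 1)) := by gcongr; norm_num

end Parameters

section OddOrder

variable [Fintype G] [DecidableEq G]

lemma IncrementParameters.mul_card_sq_le {η : ℝ} {k m ℓ n κ : ℕ} (h : IncrementParameters η k m ℓ)
    (hG : Function.Injective fun x : G ↦ x + x) (hn : 1 < (11 / 10) ^ n * η)
    (hκ : (1 / 2) ^ κ ≤ η * (1 / (1600 * (n * ℓ : ℕ))) ^ 5 / (1024 * k * ℓ)) {A : Finset G}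
    (hA : η * Fintype.card G ≤ #A) :
    η ^ 3 / 50 * (Fintype.card G : ℝ) ^ 2 ≤
      (128 ^ (n * ℓ * (κ * n))) ^ 2 * progressionCount A := by
  have hη := h.density_pos
  have bohr_empty (ρ : ℝ) : bohrSet (∅ : Finset (AddChar G ℂ)) ρ = univ :=
    eq_univ_of_forall fun x ↦ mem_bohrSet.2 (by simp)
  have start : IsDenseInBohr A ∅ (1 / (1600 * (n * ℓ : ℕ))) 2 η := by
    refine ⟨two_pos, le_rfl, ?_, ?_, ?_⟩
    · rw [IsRegularBohr, bohr_empty, bohr_empty]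
      linarith [Nat.cast_nonneg (α := ℝ) #(univ : Finset G)]
    · rw [bohr_empty]; exact subset_univ A
    · rwa [bohr_empty]
  obtain ⟨Γ, hΓ, large⟩ := start.exists_le_progressionCount h hG rfl (by positivity)
    (pow_le_one₀ (by norm_num) (by norm_num)) hκ le_rfl hn (by simp)
  have radius : ((1 / 2 : ℝ) ^ κ) ^ n * 2 = 2 / 2 ^ (κ * n) := by
    rw [← pow_mul, one_div_pow, one_div_mul_eq_div]
  have size : (Fintype.card G : ℝ) ≤
      128 ^ (n * ℓ * (κ * n)) * #(bohrSet Γ (((1 / 2) ^ κ) ^ n * 2)) := by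
    rw [radius]
    refine (Nat.cast_le.2 (card_le_pow_mul_bohrSet_card Γ (κ * n))).trans ?_
    push_cast
    gcongr
    norm_num
  calc η ^ 3 / 50 * (Fintype.card G : ℝ) ^ 2
      ≤ η ^ 3 / 50 * (128 ^ (n * ℓ * (κ * n)) * #(bohrSet Γ (((1 / 2) ^ κ) ^ n * 2))) ^ 2 := by
        gcongr
    _ = (128 ^ (n * ℓ * (κ * n))) ^ 2 *
        (η ^ 3 / 50 * #(bohrSet Γ (((1 / 2) ^ κ) ^ n * 2)) ^ 2) := by ring
    _ ≤ (128 ^ (n * ℓ * (κ * n))) ^ 2 * progressionCount A := by gcongr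

theorem card_sq_le_exp_mul_progressionCount (hG : Function.Injective fun x : G ↦ x + x) {u : ℝ}
    (hu : 1 ≤ u) {A : Finset G} (hA : Real.exp (1 - u) * Fintype.card G ≤ #A) :
    (Fintype.card G : ℝ) ^ 2 ≤
      Real.exp (10 ^ 16 * (u ^ 7 * Real.exp (u - 1))) * progressionCount A := by
  obtain ⟨k, m, ℓ, n, κ, h, hn, hκ, size⟩ := exists_incrementParameters hu
  have u_le : u ≤ u ^ 7 * Real.exp (u - 1) :=
    (le_self_pow₀ hu (by norm_num)).trans (le_mul_of_one_le_right (by positivity)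
      (Real.one_le_exp (by linarith)))
  have base : (128 : ℝ) ≤ Real.exp 7 := (two_pow_le_exp 7).trans' (by norm_num)
  have inverse : 1 ≤ Real.exp (9 * u) * (Real.exp (1 - u) ^ 3 / 50) := by
    rw [← mul_div_assoc, le_div_iff₀ (by norm_num), one_mul]
    calc (50 : ℝ) ≤ 2 ^ 6 := by norm_num
      _ ≤ Real.exp (6 : ℕ) := two_pow_le_exp 6
      _ ≤ Real.exp (9 * u + (3 : ℕ) * (1 - u)) := Real.exp_le_exp.2 (by push_cast; linarith)
      _ = Real.exp (9 * u) * Real.exp (1 - u) ^ 3 := by rw [Real.exp_add, Real.exp_nat_mul]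
  calc (Fintype.card G : ℝ) ^ 2
      ≤ Real.exp (9 * u) * (Real.exp (1 - u) ^ 3 / 50) * (Fintype.card G : ℝ) ^ 2 :=
        le_mul_of_one_le_left (by positivity) inverse
    _ = Real.exp (9 * u) * (Real.exp (1 - u) ^ 3 / 50 * (Fintype.card G : ℝ) ^ 2) := mul_assoc _ _ _
    _ ≤ Real.exp (9 * u) * ((Real.exp 7 ^ (n * ℓ * (κ * n))) ^ 2 * progressionCount A) := by
        refine mul_le_mul_of_nonneg_left ((h.mul_card_sq_le hG hn hκ hA).trans ?_)
          (Real.exp_pos _).le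
        gcongr
    _ = Real.exp (9 * u + 14 * (n * ℓ * (κ * n) : ℕ)) * progressionCount A := by
        rw [← pow_mul, ← Real.exp_nat_mul, ← mul_assoc, ← Real.exp_add]
        push_cast
        ring_nf
    _ ≤ Real.exp (10 ^ 16 * (u ^ 7 * Real.exp (u - 1))) * progressionCount A := by
        gcongr
        push_cast
        linarith

end OddOrder

end AbelianGroup

/-! ### Cyclic groups -/

section Cyclic

lemma card_filter_eq_progressionCount {R : Type*} [CommRing R] [Fintype R] [DecidableEq R]
    (A : Finset R) :
    #{t : R × R × R | t.1 ∈ A ∧ t.2.1 ∈ A ∧ t.2.2 ∈ A ∧ t.1 + t.2.2 = 2 * t.2.1} =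
      progressionCount A := by
  refine card_nbij' (fun t ↦ (t.1, t.2.1)) (fun p ↦ (p.1, p.2, p.2 + p.2 - p.1))
    (fun t ht ↦ ?_) (fun p hp ↦ ?_) (fun t ht ↦ ?_) fun _ _ ↦ rfl
  · obtain ⟨h₁, h₂, h₃, h⟩ := (mem_filter_univ t).1 (mem_coe.1 ht)
    exact mem_filter.2 ⟨mem_product.2 ⟨h₁, h₂⟩, by rwa [← two_mul, ← h, add_sub_cancel_left]⟩
  · obtain ⟨hp, h₃⟩ := mem_filter.1 (mem_coe.1 hp)
    obtain ⟨h₁, h₂⟩ := mem_product.1 hp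
    exact (mem_filter_univ _).2 ⟨h₁, h₂, h₃, by ring⟩
  · obtain ⟨-, -, -, h⟩ := (mem_filter_univ t).1 (mem_coe.1 ht)
    exact Prod.ext rfl (Prod.ext rfl (sub_eq_iff_eq_add'.2 (by rw [h, two_mul])))

variable {N : ℕ} [NeZero N]

lemma density_le_one {η : ℝ} {A : Finset (ZMod N)} (hA : η * N ≤ #A) : η ≤ 1 := by
  refine le_of_mul_le_mul_right (hA.trans ?_) (Nat.cast_pos.2 (NeZero.pos N))
  rw [one_mul]
  exact Nat.cast_le.2 ((card_le_univ A).trans_eq (ZMod.card N))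

-- Representatives in `[0, N)` satisfy `a + c = 2 * b` modulo `2 * N + 1` only if they do so in `ℕ`.
lemma exists_card_eq_progressionCount_le (A : Finset (ZMod N)) :
    ∃ A' : Finset (ZMod (2 * N + 1)), #A' = #A ∧ progressionCount A' ≤ progressionCount A := by
  set lift : ZMod N → ZMod (2 * N + 1) := fun a ↦ (a.val : ZMod (2 * N + 1))
  have val_lift (a : ZMod N) : (lift a).val = a.val :=
    ZMod.val_natCast_of_lt (a.val_lt.trans (by lia))
  have leftInverse : Function.LeftInverse (fun x : ZMod (2 * N + 1) ↦ (x.val : ZMod N)) lift :=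
    fun a ↦ by simp only [val_lift, ZMod.natCast_zmod_val]
  refine ⟨A.image lift, card_image_of_injective A leftInverse.injective,
    progressionCount_le_of_injOn (f := fun x ↦ (x.val : ZMod N)) ?_ ?_ ?_⟩
  · rw [coe_image]
    rintro _ ⟨a, -, rfl⟩ _ ⟨b, -, rfl⟩ h
    exact congrArg lift ((leftInverse a).symm.trans (h.trans (leftInverse b)))
  · exact forall_mem_image.2 fun a ha ↦ (congrArg (· ∈ A) (leftInverse a)).mpr ha
  · refine forall_mem_image.2 fun a _ ↦ forall_mem_image.2 fun b _ hc ↦ ?_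
    obtain ⟨c, -, hc⟩ := mem_image.1 hc
    have cast_eq : ((c.val + a.val : ℕ) : ZMod (2 * N + 1)) = (b.val + b.val : ℕ) := by
      push_cast
      exact eq_sub_iff_add_eq.1 hc
    have val_eq : c.val + a.val = b.val + b.val := by
      have := congrArg ZMod.val cast_eq
      rwa [ZMod.val_natCast_of_lt (by linarith [c.val_lt, a.val_lt]),
        ZMod.val_natCast_of_lt (by linarith [b.val_lt])] at this
    have mod_eq := congrArg (Nat.cast (R := ZMod N)) val_eq
    push_cast at mod_eq
    rw [← hc]
    simp only [leftInverse _]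
    exact eq_sub_iff_add_eq.2 (by simpa using mod_eq)

lemma add_self_injective_zmod_two_mul_add_one (N : ℕ) :
    Function.Injective fun x : ZMod (2 * N + 1) ↦ x + x := by
  have hunit : IsUnit (2 : ZMod (2 * N + 1)) :=
    (ZMod.isUnit_iff_coprime 2 (2 * N + 1)).2 (by simp)
  exact fun x y h ↦ hunit.mul_left_cancel (by simpa only [two_mul] using h)

lemma three_add_pow_mul_exp_le {L : ℝ} (hL : 0 ≤ L) :
    (3 + L) ^ 7 * Real.exp L ≤ 4 ^ 7 * (3 + Real.exp L * L ^ 7) := by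
  obtain h | h := le_total L 1
  · calc (3 + L) ^ 7 * Real.exp L ≤ (3 + 1) ^ 7 * Real.exp 1 := by gcongr
      _ ≤ (3 + 1) ^ 7 * (3 + Real.exp L * L ^ 7) := by
          gcongr
          linarith [Real.exp_one_lt_d9, mul_nonneg (Real.exp_pos L).le (pow_nonneg hL 7)]
      _ = 4 ^ 7 * (3 + Real.exp L * L ^ 7) := by norm_num
  · calc (3 + L) ^ 7 * Real.exp L ≤ (3 * L + L) ^ 7 * Real.exp L := by gcongr; linarith
      _ = 4 ^ 7 * (Real.exp L * L ^ 7) := by ring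
      _ ≤ 4 ^ 7 * (3 + Real.exp L * L ^ 7) := by gcongr; linarith

lemma sq_le_exp_mul_progressionCount {η : ℝ} (hη : 0 < η) {A : Finset (ZMod N)}
    (hA : η * N ≤ #A) :
    (N : ℝ) ^ 2 ≤ Real.exp (10 ^ 16 * ((3 + Real.log (1 / η)) ^ 7 * (3 * η⁻¹))) *
      progressionCount A := by
  have hη₁ := density_le_one hA
  have hN : (1 : ℝ) ≤ N := Nat.one_le_cast.2 (NeZero.pos N)
  obtain ⟨A', card_A', count⟩ := exists_card_eq_progressionCount_le A
  set u := 1 + Real.log (3 / η)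
  have hu : 1 ≤ u := le_add_of_nonneg_right (Real.log_nonneg ((one_le_div hη).2 (by linarith)))
  have exp_u : Real.exp (u - 1) = 3 * η⁻¹ := by
    rw [add_sub_cancel_left, Real.exp_log (by positivity), div_eq_mul_inv]
  have exp_neg_u : Real.exp (1 - u) = η / 3 := by
    rw [← neg_sub, Real.exp_neg, exp_u]
    field_simp
  have u_le : u ≤ 3 + Real.log (1 / η) := by
    have log_three : Real.log 3 ≤ 3 - 1 := Real.log_le_sub_one_of_pos (by norm_num)
    have := Real.log_mul (x := 3) (y := 1 / η) (by norm_num) (by positivity)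
    rw [mul_one_div] at this
    linarith
  have dense : Real.exp (1 - u) * Fintype.card (ZMod (2 * N + 1)) ≤ #A' := by
    rw [exp_neg_u, ZMod.card, card_A']
    refine hA.trans' ?_
    push_cast
    nlinarith
  have bound := card_sq_le_exp_mul_progressionCount (add_self_injective_zmod_two_mul_add_one N) hu
    dense
  rw [exp_u, ZMod.card] at bound
  calc (N : ℝ) ^ 2 ≤ ((2 * N + 1 : ℕ) : ℝ) ^ 2 := by gcongr; lia
    _ ≤ Real.exp (10 ^ 16 * (u ^ 7 * (3 * η⁻¹))) * progressionCount A' := bound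
    _ ≤ _ := by gcongr

theorem varnavides_count_general :
    ∃ c₀ c₁ : ℝ, 0 < c₀ ∧ 0 < c₁ ∧ ∀ (N : ℕ) [NeZero N] (η : ℝ), 0 < η →
      ∀ A : Finset (ZMod N), η * N ≤ #A →
        η * (N : ℝ) ^ 2 / (c₀ * Real.exp (c₁ * η⁻¹ * Real.log (1 / η) ^ 7)) ≤
          #{t : ZMod N × ZMod N × ZMod N |
            t.1 ∈ A ∧ t.2.1 ∈ A ∧ t.2.2 ∈ A ∧ t.1 + t.2.2 = 2 * t.2.1} := by
  refine ⟨Real.exp (10 ^ 16 * 9 * 4 ^ 7), 10 ^ 16 * 3 * 4 ^ 7, Real.exp_pos _, by positivity,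
    fun N _ η hη A hA ↦ ?_⟩
  have hη₁ := density_le_one hA
  have exp_log : Real.exp (Real.log (1 / η)) = η⁻¹ := by
    rw [Real.exp_log (by positivity), one_div]
  have exponent := three_add_pow_mul_exp_le (Real.log_nonneg ((one_le_div hη).2 hη₁))
  rw [exp_log] at exponent
  rw [card_filter_eq_progressionCount, ← Real.exp_add, div_le_iff₀' (Real.exp_pos _)]
  calc η * (N : ℝ) ^ 2 ≤ (N : ℝ) ^ 2 := mul_le_of_le_one_left (by positivity) hη₁
    _ ≤ Real.exp (10 ^ 16 * ((3 + Real.log (1 / η)) ^ 7 * (3 * η⁻¹))) * progressionCount A :=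
        sq_le_exp_mul_progressionCount hη hA
    _ ≤ _ := by
        gcongr
        linarith

lemma inv_mul_log_pow_le {η : ℝ} (hη : 0 < η) (hη₁ : η ≤ 1) :
    η⁻¹ * Real.log (1 / η) ^ 7 ≤ 384 * (η ^ (-(3 : ℝ) / 2) * Real.log (1 / η) ^ 3) := by
  set L := Real.log (1 / η) with hL
  have hL₀ : 0 ≤ L := Real.log_nonneg ((one_le_div hη).2 hη₁)
  have log_η : Real.log η = -L := by rw [hL, one_div, Real.log_inv, neg_neg]
  have rpow_η (s : ℝ) : η ^ s = Real.exp (-(s * L)) := by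
    rw [Real.rpow_def_of_pos hη, log_η, neg_mul, mul_comm]
  have fourth_power : L ^ 4 ≤ 384 * Real.exp (L / 2) := by
    have := Real.pow_div_factorial_le_exp (L / 2) (by positivity) 4
    rw [div_le_iff₀ (by positivity), div_pow] at this
    norm_num [Nat.factorial] at this
    linarith
  calc η⁻¹ * L ^ 7 = Real.exp L * (L ^ 4 * L ^ 3) := by
        rw [← Real.rpow_neg_one, rpow_η]; ring_nf
    _ ≤ Real.exp L * (384 * Real.exp (L / 2) * L ^ 3) := by gcongr
    _ = 384 * (Real.exp (L + L / 2) * L ^ 3) := by rw [Real.exp_add]; ring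
    _ = 384 * (η ^ (-(3 : ℝ) / 2) * L ^ 3) := by rw [rpow_η]; ring_nf

lemma div_mul_exp_rpow_le {c₀ c₁ η x : ℝ} (hc₀ : 0 < c₀) (hc₁ : 0 < c₁) (hη : 0 < η)
    (hη₁ : η ≤ 1) (hx : 0 ≤ x) :
    x / (c₀ * Real.exp (c₁ * 384 * η ^ (-(3 : ℝ) / 2) * Real.log (1 / η) ^ 3)) ≤
      x / (c₀ * Real.exp (c₁ * η⁻¹ * Real.log (1 / η) ^ 7)) := by
  have exponent := mul_le_mul_of_nonneg_left (inv_mul_log_pow_le hη hη₁) hc₁.le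
  refine div_le_div_of_nonneg_left hx (by positivity) ?_
  gcongr _ * Real.exp ?_
  linarith

end Cyclic

/-- **Varnavides-type counting (Lemma 4).**
There exist absolute constants `c₀, c₁ > 0` such that: for `N'` prime, `η > 0` and
`A' ⊆ ℤ/N'ℤ` with `|A'| ≥ ηN'`, the number of triples `(n₁, n₂, n₃) ∈ A'³` with
`n₁ + n₃ = 2n₂` is at least `η·N'²/(c₀·exp(c₁·η^{−3/2}·(log(1/η))³))`. -/
theorem varnavides_count :
    ∃ c₀ c₁ : ℝ, 0 < c₀ ∧ 0 < c₁ ∧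
      ∀ (N' : ℕ) [NeZero N'], Nat.Prime N' →
        ∀ η : ℝ, 0 < η →
          ∀ A' : Finset (ZMod N'), (A'.card : ℝ) ≥ η * N' →
            ((Finset.univ.filter fun t : ZMod N' × ZMod N' × ZMod N' =>
                t.1 ∈ A' ∧ t.2.1 ∈ A' ∧ t.2.2 ∈ A' ∧ t.1 + t.2.2 = 2 * t.2.1).card : ℝ) ≥
              η * (N' : ℝ) ^ 2 /
                (c₀ * Real.exp (c₁ * η ^ (-(3 : ℝ) / 2) * (Real.log (1 / η)) ^ 3)) := by
  obtain ⟨c₀, c₁, hc₀, hc₁, h⟩ := varnavides_count_general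
  exact ⟨c₀, c₁ * 384, hc₀, by positivity, fun N _ _ η hη A hA ↦
    (h N η hη A hA).trans' (div_mul_exp_rpow_le hc₀ hc₁ hη (density_le_one hA) (by positivity))⟩
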